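/- arXiv:2604.24529 — 11 statements merged into one kernel-verified Lean document; each statement's English description precedes it below -/
import Mathlib

section
/- A normed space X has the Daugavet property if and only if for every y in the unit sphere of X, every x* in the unit sphere of the dual X*, and every ε > 0, there exists y* in the unit sphere of X* such that y*(y) ≥ 1 − ε and ‖x* + y*‖ ≥ 2 − ε. -/
/-- A normed space `X` has the Daugavet property if `‖Id + T‖ = 1 + ‖T‖` for every
rank-one bounded linear operator `T : X → X`, i.e. every operator of the form
`y ↦ f y • x` for a continuous functional `f` and a vector `x`. -/
def DaugavetProperty (X : Type*) [SeminormedAddCommGroup X] [NormedSpace ℝ X] : Prop :=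
  ∀ (f : X →L[ℝ] ℝ) (x : X),
    ‖ContinuousLinearMap.id ℝ X + f.smulRight x‖ = 1 + ‖f.smulRight x‖


/-!
Write `f ⊗ x` for the operator `z ↦ f z • x`. For a functional `g`, composition gives
`g ∘ (Id + f ⊗ x) = g + g x • f`, so by Hahn–Banach `‖Id + f ⊗ x‖` is the supremum of
`‖g + g x • f‖` over the unit sphere of the dual. When `f` and `x` have norm one, this number is
close to `2` for a given `g` only if `|g x|` is close to `1`; after replacing `g` by `-g` if
necessary, `g x • f` is then close to `f`, and `‖g + g x • f‖` is close to `‖f + g‖`. Unit `f` and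
`x` suffice because equality in the triangle inequality for `u + v` passes to `u + c • v`, `0 ≤ c`.
-/

lemma norm_add_smul_eq_of_norm_add_eq {E : Type*} [SeminormedAddCommGroup E] [NormedSpace ℝ E]
    {u v : E} (h : ‖u + v‖ = ‖u‖ + ‖v‖) {c : ℝ} (hc : 0 ≤ c) :
    ‖u + c • v‖ = ‖u‖ + ‖c • v‖ := by
  refine (norm_add_le _ _).antisymm ?_
  rw [norm_smul, Real.norm_of_nonneg hc]
  rcases le_total c 1 with hc1 | hc1
  · have : ‖u‖ + ‖v‖ ≤ ‖u + c • v‖ + (1 - c) * ‖v‖ := calc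
      ‖u‖ + ‖v‖ = ‖(u + c • v) + (1 - c) • v‖ := by rw [← h]; congr 1; module
      _ ≤ ‖u + c • v‖ + ‖(1 - c) • v‖ := norm_add_le _ _
      _ = ‖u + c • v‖ + (1 - c) * ‖v‖ := by rw [norm_smul, Real.norm_of_nonneg (sub_nonneg.2 hc1)]
    linarith
  · have : c * (‖u‖ + ‖v‖) ≤ ‖u + c • v‖ + (c - 1) * ‖u‖ := calc
      c * (‖u‖ + ‖v‖) = ‖(u + c • v) + (c - 1) • u‖ := by
        rw [← h, ← Real.norm_of_nonneg hc, ← norm_smul, Real.norm_of_nonneg hc]; congr 1; module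
      _ ≤ ‖u + c • v‖ + ‖(c - 1) • u‖ := norm_add_le _ _
      _ = ‖u + c • v‖ + (c - 1) * ‖u‖ := by rw [norm_smul, Real.norm_of_nonneg (sub_nonneg.2 hc1)]
    linarith

lemma exists_norm_eq_one_lt_norm_comp {𝕜 E F : Type*} [RCLike 𝕜]
    [SeminormedAddCommGroup E] [NormedSpace 𝕜 E] [SeminormedAddCommGroup F] [NormedSpace 𝕜 F]
    (T : E →L[𝕜] F) (hT : 0 < ‖T‖) {r : ℝ} (hr : r < ‖T‖) :
    ∃ g : F →L[𝕜] 𝕜, ‖g‖ = 1 ∧ r < ‖g.comp T‖ := by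
  by_contra! h
  refine (max_lt hr hT).not_ge (T.opNorm_le_bound (le_max_right r 0) fun z ↦ ?_)
  rcases eq_or_ne ‖T z‖ 0 with hTz | hTz
  · rw [hTz]
    positivity
  obtain ⟨g, hg, hgTz⟩ := exists_dual_vector 𝕜 (T z) hTz
  calc ‖T z‖ = ‖g.comp T z‖ := by simp [hgTz]
    _ ≤ max r 0 * ‖z‖ := (g.comp T).le_of_opNorm_le ((h g hg).trans (le_max_left r 0)) z

section Comp

variable {𝕜 X : Type*} [NontriviallyNormedField 𝕜] [SeminormedAddCommGroup X] [NormedSpace 𝕜 X]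

lemma comp_id_add_smulRight (f g : X →L[𝕜] 𝕜) (x : X) :
    g.comp (ContinuousLinearMap.id 𝕜 X + f.smulRight x) = g + g x • f := by
  ext z
  simp [mul_comm]

lemma abs_norm_add_sub_norm_comp_id_add_smulRight_le (f g : X →L[𝕜] 𝕜) (x : X) :
    |‖f + g‖ - ‖g.comp (ContinuousLinearMap.id 𝕜 X + f.smulRight x)‖| ≤ ‖1 - g x‖ * ‖f‖ := by
  rw [comp_id_add_smulRight]
  calc |‖f + g‖ - ‖g + g x • f‖| ≤ ‖(f + g) - (g + g x • f)‖ := abs_norm_sub_norm_le _ _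
    _ = ‖(1 - g x) • f‖ := by congr 1; module
    _ = ‖1 - g x‖ * ‖f‖ := norm_smul _ _

end Comp

section RankOne

variable {X : Type*} [SeminormedAddCommGroup X] [NormedSpace ℝ X] {f : X →L[ℝ] ℝ} {x : X}

lemma abs_norm_add_sub_norm_comp_le_one_sub {g : X →L[ℝ] ℝ} (hf : ‖f‖ = 1) (hg : ‖g‖ = 1)
    (hx : ‖x‖ = 1) :
    |‖f + g‖ - ‖g.comp (ContinuousLinearMap.id ℝ X + f.smulRight x)‖| ≤ 1 - g x := by
  have hgx : g x ≤ 1 := (le_abs_self _).trans ((g.unit_le_opNorm x hx.le).trans_eq hg)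
  simpa only [hf, mul_one, Real.norm_of_nonneg (sub_nonneg.2 hgx)] using
    abs_norm_add_sub_norm_comp_id_add_smulRight_le f g x

lemma exists_codirected_of_norm_id_add_smulRight_eq_two (hf : ‖f‖ = 1) (hx : ‖x‖ = 1)
    (h : ‖ContinuousLinearMap.id ℝ X + f.smulRight x‖ = 2) {ε : ℝ} (hε : 0 < ε) :
    ∃ g : X →L[ℝ] ℝ, ‖g‖ = 1 ∧ g x ≥ 1 - ε ∧ ‖f + g‖ ≥ 2 - ε := by
  set T := ContinuousLinearMap.id ℝ X + f.smulRight x with hT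
  obtain ⟨g, hg, hgT, hgx⟩ : ∃ g : X →L[ℝ] ℝ, ‖g‖ = 1 ∧ 2 - ε / 2 < ‖g.comp T‖ ∧ 0 ≤ g x := by
    obtain ⟨g, hg, hgT⟩ := exists_norm_eq_one_lt_norm_comp T (by linarith) (r := 2 - ε / 2)
      (by linarith)
    rcases le_total 0 (g x) with hgx | hgx
    · exact ⟨g, hg, hgT, hgx⟩
    · exact ⟨-g, by rwa [norm_neg], by rwa [ContinuousLinearMap.neg_comp, norm_neg],
        neg_nonneg.2 hgx⟩
  have hgT_le : ‖g.comp T‖ ≤ 1 + g x := calc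
    ‖g.comp T‖ = ‖g + g x • f‖ := by rw [hT, comp_id_add_smulRight]
    _ ≤ ‖g‖ + ‖g x • f‖ := norm_add_le _ _
    _ = 1 + g x := by rw [norm_smul, Real.norm_of_nonneg hgx, hf, hg, mul_one]
  have hclose := abs_le.1 (abs_norm_add_sub_norm_comp_le_one_sub hf hg hx)
  exact ⟨g, hg, by linarith, by linarith [hclose.1]⟩

lemma norm_id_add_smulRight_eq_two_of_codirected (hf : ‖f‖ = 1) (hx : ‖x‖ = 1)
    (h : ∀ ε : ℝ, 0 < ε → ∃ g : X →L[ℝ] ℝ, ‖g‖ = 1 ∧ g x ≥ 1 - ε ∧ ‖f + g‖ ≥ 2 - ε) :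
    ‖ContinuousLinearMap.id ℝ X + f.smulRight x‖ = 2 := by
  set T := ContinuousLinearMap.id ℝ X + f.smulRight x
  have hle : ‖T‖ ≤ 2 := calc
    ‖T‖ ≤ ‖ContinuousLinearMap.id ℝ X‖ + ‖f.smulRight x‖ := norm_add_le _ _
    _ ≤ 1 + 1 := add_le_add ContinuousLinearMap.norm_id_le
        (by rw [ContinuousLinearMap.norm_smulRight_apply, hf, hx, mul_one])
    _ = 2 := one_add_one_eq_two
  refine hle.antisymm (le_of_forall_pos_le_add fun ε hε ↦ ?_)
  obtain ⟨g, hg, hgx, hfg⟩ := h (ε / 2) (half_pos hε)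
  have hgT : ‖g.comp T‖ ≤ ‖T‖ := by simpa only [hg, one_mul] using g.opNorm_comp_le T
  have hclose := abs_le.1 (abs_norm_add_sub_norm_comp_le_one_sub hf hg hx)
  linarith [hclose.2]

end RankOne

lemma daugavetProperty_iff_norm_id_add_smulRight_eq_two
    {X : Type*} [SeminormedAddCommGroup X] [NormedSpace ℝ X] [NontrivialTopology X] :
    DaugavetProperty X ↔ ∀ x : X, ‖x‖ = 1 → ∀ f : X →L[ℝ] ℝ, ‖f‖ = 1 →
      ‖ContinuousLinearMap.id ℝ X + f.smulRight x‖ = 2 := by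
  refine ⟨fun h x hx f hf ↦ ?_, fun h f x ↦ ?_⟩
  · rw [h f x, ContinuousLinearMap.norm_smulRight_apply, hf, hx, mul_one, one_add_one_eq_two]
  have hid : ‖ContinuousLinearMap.id ℝ X‖ = 1 := ContinuousLinearMap.norm_id
  by_cases hfx : ‖f.smulRight x‖ = 0
  · rw [norm_add_eq_norm_left _ hfx, hfx, add_zero, hid]
  rw [ContinuousLinearMap.norm_smulRight_apply, mul_eq_zero, not_or] at hfx
  obtain ⟨hf, hx⟩ := hfx
  set g := ‖f‖⁻¹ • f
  set y := ‖x‖⁻¹ • x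
  have hg : ‖g‖ = 1 := by simp [g, norm_smul, hf]
  have hy : ‖y‖ = 1 := by simp [y, norm_smul, hx]
  have hsmul : f.smulRight x = (‖f‖ * ‖x‖) • g.smulRight y := by
    ext z
    simp only [g, y, ContinuousLinearMap.smulRight_apply, smul_apply, smul_smul, smul_eq_mul]
    congr 1
    field_simp
  have hunit : ‖ContinuousLinearMap.id ℝ X + g.smulRight y‖ =
      ‖ContinuousLinearMap.id ℝ X‖ + ‖g.smulRight y‖ := by
    rw [h y hy g hg, hid, ContinuousLinearMap.norm_smulRight_apply, hg, hy, mul_one,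
      one_add_one_eq_two]
  rw [hsmul, norm_add_smul_eq_of_norm_add_eq hunit (by positivity), hid]

theorem daugavet_iff_functional_codirected_general
    (X : Type*) [SeminormedAddCommGroup X] [NormedSpace ℝ X] [NontrivialTopology X] :
    DaugavetProperty X ↔
      ∀ y : X, ‖y‖ = 1 → ∀ xs : X →L[ℝ] ℝ, ‖xs‖ = 1 → ∀ ε : ℝ, 0 < ε →
        ∃ ys : X →L[ℝ] ℝ, ‖ys‖ = 1 ∧ ys y ≥ 1 - ε ∧ ‖xs + ys‖ ≥ 2 - ε := by
  rw [daugavetProperty_iff_norm_id_add_smulRight_eq_two]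
  refine forall₂_congr fun y hy ↦ forall₂_congr fun xs hxs ↦ ⟨fun h ε hε ↦ ?_, fun h ↦ ?_⟩
  · exact exists_codirected_of_norm_id_add_smulRight_eq_two hxs hy h hε
  · exact norm_id_add_smulRight_eq_two_of_codirected hxs hy h

theorem daugavet_iff_functional_codirected
    (X : Type*) [NormedAddCommGroup X] [NormedSpace ℝ X] [Nontrivial X] :
    DaugavetProperty X ↔
      ∀ y : X, ‖y‖ = 1 → ∀ xs : X →L[ℝ] ℝ, ‖xs‖ = 1 → ∀ ε : ℝ, 0 < ε →
        ∃ ys : X →L[ℝ] ℝ, ‖ys‖ = 1 ∧ ys y ≥ 1 - ε ∧ ‖xs + ys‖ ≥ 2 - ε :=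
  daugavet_iff_functional_codirected_general X
end

section
/- If a normed space X has the Daugavet property, then X has the slice diameter two property; that is, for every x* in the unit sphere of X* and every ε > 0, the slice Slice(B_X, x*, ε) = {x ∈ B_X : x*(x) > 1 − ε} has diameter exactly 2. -/
/-!
Let `x` be a unit vector in the slice and let `g` be the normalized functional. The Daugavet
equation for `g ⊗ (-x)` gives a unit vector `y` with `g y ≥ 0` at which `‖y - g y • x‖` is almost
`2`. As this norm is at most `1 + g y`, the number `g y` is almost `1`; hence `y` lies in the
slice, and `‖y - x‖` is almost `2`.
-/

section Daugavet

variable {X F : Type*} [SeminormedAddCommGroup X] [NormedSpace ℝ X]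
  [SeminormedAddCommGroup F] [NormedSpace ℝ F]

theorem exists_norm_eq_one_lt_norm_apply {A : X →L[ℝ] F} (hA : 0 < ‖A‖) {r : ℝ} (hr : r < ‖A‖) :
    ∃ x, ‖x‖ = 1 ∧ r < ‖A x‖ := by
  obtain ⟨x, hx⟩ := A.exists_mul_lt_of_lt_opNorm (le_max_right r 0) (max_lt hr hA)
  have hx_pos : 0 < ‖x‖ := by
    have hA_mul : 0 < ‖A‖ * ‖x‖ :=
      calc
        0 ≤ max r 0 * ‖x‖ := by positivity
        _ < ‖A x‖ := hx
        _ ≤ ‖A‖ * ‖x‖ := A.le_opNorm x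
    exact pos_of_mul_pos_right hA_mul hA.le
  refine ⟨‖x‖⁻¹ • x, ?_, ?_⟩
  · rw [norm_smul, norm_inv, norm_norm, inv_mul_cancel₀ hx_pos.ne']
  · rw [map_smul, norm_smul, norm_inv, norm_norm, lt_inv_mul_iff₀' hx_pos]
    exact (mul_le_mul_of_nonneg_right (le_max_left r 0) hx_pos.le).trans_lt hx

theorem exists_norm_eq_one_nonneg_lt_norm_apply (f : X →L[ℝ] ℝ) {A : X →L[ℝ] F}
    (hA : 0 < ‖A‖) {r : ℝ} (hr : r < ‖A‖) :
    ∃ x, ‖x‖ = 1 ∧ 0 ≤ f x ∧ r < ‖A x‖ := by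
  obtain ⟨x, hx, hAx⟩ := exists_norm_eq_one_lt_norm_apply hA hr
  rcases le_total 0 (f x) with hfx | hfx
  · exact ⟨x, hx, hfx, hAx⟩
  · exact ⟨-x, by rwa [norm_neg], by rwa [map_neg, neg_nonneg], by rwa [map_neg, norm_neg]⟩

theorem exists_norm_eq_one_lt_apply {f : X →L[ℝ] ℝ} (hf : 0 < ‖f‖) {a : ℝ} (ha : a < ‖f‖) :
    ∃ x, ‖x‖ = 1 ∧ a < f x := by
  obtain ⟨x, hx, hfx, hax⟩ := exists_norm_eq_one_nonneg_lt_norm_apply f hf ha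
  exact ⟨x, hx, by rwa [Real.norm_of_nonneg hfx] at hax⟩

theorem norm_add_smul_le_norm_add_add_one_sub {x y : X} (hx : ‖x‖ ≤ 1) {t : ℝ} (ht : t ≤ 1) :
    ‖y + t • x‖ ≤ ‖x + y‖ + (1 - t) :=
  calc
    ‖y + t • x‖ = ‖(x + y) - (1 - t) • x‖ := by congr 1; module
    _ ≤ ‖x + y‖ + ‖(1 - t) • x‖ := norm_sub_le _ _
    _ = ‖x + y‖ + (1 - t) * ‖x‖ := by rw [norm_smul, Real.norm_of_nonneg (sub_nonneg.2 ht)]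
    _ ≤ ‖x + y‖ + (1 - t) := by gcongr; exact mul_le_of_le_one_right (sub_nonneg.2 ht) hx

theorem DaugavetProperty.exists_norm_eq_one_lt_apply_lt_norm_add (h : DaugavetProperty X)
    {f : X →L[ℝ] ℝ} (hf : 0 < ‖f‖) {x : X} (hx : ‖x‖ = 1) {a b : ℝ}
    (ha : a < ‖f‖) (hb : b < 2) :
    ∃ y, ‖y‖ = 1 ∧ a < f y ∧ b < ‖x + y‖ := by
  let g : X →L[ℝ] ℝ := ‖f‖⁻¹ • f
  let T : X →L[ℝ] X := ContinuousLinearMap.id ℝ X + g.smulRight x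
  have hg : ‖g‖ = 1 := by rw [norm_smul, norm_inv, norm_norm, inv_mul_cancel₀ hf.ne']
  have hT : ‖T‖ = 2 := by
    rw [h g x, ContinuousLinearMap.norm_smulRight_apply, hg, hx, one_mul, one_add_one_eq_two]
  have hr : max (1 + a / ‖f‖) (1 + b / 2) < ‖T‖ := by
    rw [hT]
    exact max_lt (by linarith [(div_lt_one hf).2 ha]) (by linarith)
  obtain ⟨y, hy, hgy, hlarge⟩ :=
    exists_norm_eq_one_nonneg_lt_norm_apply g (hT ▸ two_pos) hr
  obtain ⟨hlarge_a, hlarge_b⟩ : 1 + a / ‖f‖ < ‖y + g y • x‖ ∧ 1 + b / 2 < ‖y + g y • x‖ :=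
    max_lt_iff.1 hlarge
  have hgy_le : g y ≤ 1 := by
    simpa only [hg, hy, one_mul] using (Real.le_norm_self _).trans (g.le_opNorm y)
  have hupper : ‖y + g y • x‖ ≤ 1 + g y := by
    simpa only [norm_smul, hx, hy, mul_one, Real.norm_of_nonneg hgy] using
      norm_add_le y (g y • x)
  refine ⟨y, hy, ?_, ?_⟩
  · have hag : a / ‖f‖ < g y := by linarith
    rwa [show g y = f y / ‖f‖ from inv_mul_eq_div _ _, div_lt_div_iff_of_pos_right hf] at hag
  · linarith [norm_add_smul_le_norm_add_add_one_sub (y := y) hx.le hgy_le]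

theorem daugavet_implies_sliceDiameterTwo_general (h : DaugavetProperty X) {f : X →L[ℝ] ℝ}
    (hf : 0 < ‖f‖) {a : ℝ} (ha : a < ‖f‖) :
    Metric.diam {x : X | ‖x‖ ≤ 1 ∧ a < f x} = 2 := by
  have hsubset : {x : X | ‖x‖ ≤ 1 ∧ a < f x} ⊆ Metric.closedBall 0 1 :=
    fun x hx => mem_closedBall_zero_iff.2 hx.1
  apply le_antisymm
  · simpa only [mul_one] using Metric.diam_le_of_subset_closedBall zero_le_one hsubset
  · refine le_of_forall_lt fun b hb => ?_
    obtain ⟨x, hx, hax⟩ := exists_norm_eq_one_lt_apply hf ha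
    obtain ⟨y, hy, hay, hxy⟩ :=
      h.exists_norm_eq_one_lt_apply_lt_norm_add hf (x := -x) (by rwa [norm_neg]) ha hb
    calc
      b < dist x y := by rwa [dist_eq_norm_neg_add]
      _ ≤ Metric.diam {x : X | ‖x‖ ≤ 1 ∧ a < f x} :=
        Metric.dist_le_diam_of_mem (Metric.isBounded_closedBall.subset hsubset)
          ⟨hx.le, hax⟩ ⟨hy.le, hay⟩

end Daugavet

/-- If a normed space has the Daugavet property, then every slice of the closed unit
ball determined by a norm-one functional has diameter exactly 2 (the slice diameter
two property). -/
theorem daugavet_implies_sliceDiameterTwo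
    (X : Type*) [NormedAddCommGroup X] [NormedSpace ℝ X] (h : DaugavetProperty X) :
    ∀ xs : X →L[ℝ] ℝ, ‖xs‖ = 1 → ∀ ε : ℝ, 0 < ε →
      Metric.diam {x : X | ‖x‖ ≤ 1 ∧ xs x > 1 - ε} = 2 := by
  intro xs hxs ε hε
  exact daugavet_implies_sliceDiameterTwo_general h (hxs ▸ one_pos)
    (hxs ▸ sub_lt_self 1 hε)
end

section
/- Let X be a normed space with the Daugavet property. Then for every x in the unit sphere of X, every ε > 0, and every separable subspace V of the dual X*, there exists x* in the unit sphere of X* such that Re x*(x) ≥ 1 − ε and ‖x* + f‖ = 1 + ‖f‖ for all f ∈ V. -/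
/-!
For `‖x‖ = 1` and `f ≠ 0`, the Daugavet equation for the rank-one operator `f ⊗ x` provides a unit
vector `y` with `0 ≤ f y` and `‖y + f y • x‖` almost `1 + ‖f‖`. A functional in the unit ball that
almost attains this norm at `y + f y • x` is almost `1` at both `y` and `x`, and `f y` is almost
`‖f‖`. Hence every weak-star slice of the dual ball contains a smaller slice all of whose members
`g` have `‖g + f‖` almost `1 + ‖f‖`. Iterating this along a dense sequence of functionals `f`, each
treated infinitely often with smaller and smaller errors, the Banach-Alaoglu theorem yields a
functional in all of the nested slices.
-/

open Filter Topology

section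

variable {X : Type*} [SeminormedAddCommGroup X] [NormedSpace ℝ X]

/-- A weak-star slice of the closed unit ball of the dual of `X`, determined by a point of the unit
sphere of `X`. The defining inequality is not strict, so that slices are weak-star compact. -/
def IsWeakStarSlice (K : Set (StrongDual ℝ X)) : Prop :=
  ∃ (z : X) (r : ℝ), ‖z‖ = 1 ∧ 0 < r ∧ K = {g | ‖g‖ ≤ 1 ∧ 1 - r ≤ g z}

namespace IsWeakStarSlice

variable {K : Set (StrongDual ℝ X)}

theorem norm_le_one (hK : IsWeakStarSlice K) {g : StrongDual ℝ X} (hg : g ∈ K) : ‖g‖ ≤ 1 := by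
  obtain ⟨z, r, -, -, rfl⟩ := hK
  exact hg.1

theorem nonempty (hK : IsWeakStarSlice K) : K.Nonempty := by
  obtain ⟨z, r, hz, hr, rfl⟩ := hK
  obtain ⟨g, hg, hgz⟩ := exists_dual_vector'' ℝ z
  have hgz' : g z = 1 := by rw [hgz, hz, RCLike.ofReal_one]
  exact ⟨g, hg, by rw [hgz']; linarith⟩

theorem isCompact_preimage (hK : IsWeakStarSlice K) :
    IsCompact (WeakDual.toStrongDual (𝕜 := ℝ) (E := X) ⁻¹' K) := by
  obtain ⟨z, r, -, -, rfl⟩ := hK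
  have hball := WeakDual.isCompact_closedBall (0 : StrongDual ℝ X) 1
  have hhalf : IsClosed {g : WeakDual ℝ X | 1 - r ≤ g z} :=
    isClosed_le continuous_const (WeakDual.eval_continuous z)
  convert hball.inter_right hhalf using 1
  ext g
  simp

theorem iInter_nonempty {L : ℕ → Set (StrongDual ℝ X)} (hL : ∀ n, IsWeakStarSlice (L n))
    (hanti : ∀ n, L (n + 1) ⊆ L n) : (⋂ n, L n).Nonempty := by
  let toDual := WeakDual.toStrongDual (𝕜 := ℝ) (E := X)
  have hweak : (⋂ n, toDual ⁻¹' L n).Nonempty :=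
    IsCompact.nonempty_iInter_of_sequence_nonempty_isCompact_isClosed _
      (fun n ↦ Set.preimage_mono (hanti n))
      (fun n ↦ (hL n).nonempty.preimage toDual.surjective)
      (hL 0).isCompact_preimage
      (fun n ↦ (hL n).isCompact_preimage.isClosed)
  obtain ⟨g, hg⟩ := hweak
  exact ⟨toDual g, by rwa [← Set.preimage_iInter] at hg⟩

theorem inter_iInter_nonempty (hK : IsWeakStarSlice K) {ι : Type*} [Countable ι]
    {A : ι → Set (StrongDual ℝ X)}
    (hA : ∀ i L, IsWeakStarSlice L → ∃ M, IsWeakStarSlice M ∧ M ⊆ L ∩ A i) :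
    (K ∩ ⋂ i, A i).Nonempty := by
  cases isEmpty_or_nonempty ι with
  | inl _ => simpa only [Set.iInter_of_empty, Set.inter_univ] using hK.nonempty
  | inr _ =>
    obtain ⟨u, hu⟩ := exists_surjective_nat ι
    choose M hM hM_sub using hA
    let L : ℕ → {L : Set (StrongDual ℝ X) // IsWeakStarSlice L} := fun n ↦
      Nat.rec ⟨K, hK⟩ (fun k L ↦ ⟨M (u k) L.1 L.2, hM (u k) L.1 L.2⟩) n
    have hL_succ (n : ℕ) : (L (n + 1)).1 ⊆ (L n).1 ∩ A (u n) := hM_sub (u n) (L n).1 (L n).2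
    obtain ⟨g, hg⟩ := iInter_nonempty (fun n ↦ (L n).2)
      (fun n ↦ (hL_succ n).trans Set.inter_subset_left)
    rw [Set.mem_iInter] at hg
    refine ⟨g, hg 0, Set.mem_iInter.mpr (hu.forall.mpr fun n ↦ ?_)⟩
    exact (hL_succ n (hg (n + 1))).2

end IsWeakStarSlice

theorem exists_isWeakStarSlice_forall_le_apply {w : X} {c : ℝ} (hc : 0 ≤ c) (hcw : c < ‖w‖) :
    ∃ L, IsWeakStarSlice L ∧ ∀ g ∈ L, c ≤ g w := by
  have hw : 0 < ‖w‖ := hc.trans_lt hcw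
  refine ⟨_, ⟨‖w‖⁻¹ • w, 1 - c / ‖w‖, ?_, ?_, rfl⟩, fun g hg ↦ ?_⟩
  · rw [norm_smul, norm_inv, norm_norm, inv_mul_cancel₀ hw.ne']
  · rwa [sub_pos, div_lt_one hw]
  · have hgw : c / ‖w‖ ≤ g w / ‖w‖ := by
      simpa only [sub_sub_cancel, map_smul, smul_eq_mul, inv_mul_eq_div] using hg.2
    exact (div_le_div_iff_of_pos_right hw).mp hgw

theorem apply_le_norm_of_norm_le_one (g : StrongDual ℝ X) {y : X} (hy : ‖y‖ ≤ 1) : g y ≤ ‖g‖ :=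
  (Real.le_norm_self _).trans (g.unit_le_opNorm y hy)

theorem le_norm_add_and_le_mul_apply {f g : StrongDual ℝ X} {x y : X} {η : ℝ}
    (hx : ‖x‖ ≤ 1) (hy : ‖y‖ ≤ 1) (hg : ‖g‖ ≤ 1) (hfy : 0 ≤ f y)
    (h : 1 + ‖f‖ - η ≤ g (y + f y • x)) :
    1 + ‖f‖ - η ≤ ‖g + f‖ ∧ ‖f‖ - 2 * η ≤ ‖f‖ * g x := by
  have hsplit : 1 + ‖f‖ - η ≤ g y + f y * g x := by
    simpa only [map_add, map_smul, smul_eq_mul] using h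
  have hgy : g y ≤ 1 := (apply_le_norm_of_norm_le_one g hy).trans hg
  have hgx : |g x| ≤ 1 := (g.unit_le_opNorm x hx).trans hg
  have hfgx : f y * g x ≤ f y := mul_le_of_le_one_right hfy (le_of_abs_le hgx)
  constructor
  · calc 1 + ‖f‖ - η ≤ (g + f) y := by rw [add_apply]; linarith
      _ ≤ ‖g + f‖ := apply_le_norm_of_norm_le_one _ hy
  · have hgap : 0 ≤ ‖f‖ - f y := sub_nonneg.mpr (apply_le_norm_of_norm_le_one f hy)
    calc ‖f‖ - 2 * η ≤ f y * g x + (‖f‖ - f y) * (-1) := by linarith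
      _ ≤ f y * g x + (‖f‖ - f y) * g x := by gcongr; exact neg_le_of_abs_le hgx
      _ = ‖f‖ * g x := by ring

namespace DaugavetProperty

theorem exists_lt_norm_add_smul (h : DaugavetProperty X) (f : StrongDual ℝ X) {x : X}
    (hx : ‖x‖ = 1) {c : ℝ} (hc₀ : 0 ≤ c) (hc : c < 1 + ‖f‖) :
    ∃ y : X, ‖y‖ = 1 ∧ 0 ≤ f y ∧ c < ‖y + f y • x‖ := by
  have hnorm : ‖ContinuousLinearMap.id ℝ X + f.smulRight x‖ = 1 + ‖f‖ := by
    rw [h f x, ContinuousLinearMap.norm_smulRight_apply, hx, mul_one]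
  obtain ⟨y, hy, hcy⟩ : ∃ y : X, ‖y‖ = 1 ∧ c < ‖y + f y • x‖ := by
    by_contra! hle
    exact hc.not_ge (hnorm.symm.trans_le (ContinuousLinearMap.opNorm_le_of_unit_norm hc₀ hle))
  rcases le_total 0 (f y) with hfy | hfy
  · exact ⟨y, hy, hfy, hcy⟩
  · refine ⟨-y, by rwa [norm_neg], by rwa [map_neg, neg_nonneg], ?_⟩
    rwa [map_neg, neg_smul, ← neg_add, norm_neg]

theorem exists_isWeakStarSlice_subset_inter (h : DaugavetProperty X) {K : Set (StrongDual ℝ X)}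
    (hK : IsWeakStarSlice K) (f : StrongDual ℝ X) {η : ℝ} (hη : 0 < η) :
    ∃ L, IsWeakStarSlice L ∧ L ⊆ K ∩ {g | 1 + ‖f‖ - η ≤ ‖g + f‖} := by
  obtain ⟨x, δ, hx, hδ, rfl⟩ := hK
  rcases (norm_nonneg f).eq_or_lt' with hf | hf
  · refine ⟨_, ⟨x, min δ η, hx, lt_min hδ hη, rfl⟩, fun g ⟨hg, hgx⟩ ↦ ⟨⟨hg, ?_⟩, ?_⟩⟩
    · exact (sub_le_sub_left (min_le_left δ η) 1).trans hgx
    · calc 1 + ‖f‖ - η ≤ 1 - min δ η := by linarith [min_le_right δ η]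
        _ ≤ g x := hgx
        _ ≤ ‖g‖ := apply_le_norm_of_norm_le_one g hx.le
        _ = ‖g + f‖ := (norm_add_eq_norm_left g hf).symm
  · obtain ⟨θ, hθ, hθ_lt⟩ : ∃ θ, 0 < θ ∧ θ < min (min η (δ * ‖f‖ / 2)) 1 :=
      exists_between (by positivity)
    simp only [lt_min_iff] at hθ_lt
    obtain ⟨⟨hθη, hθδ⟩, hθ1⟩ := hθ_lt
    obtain ⟨y, hy, hfy, hyx⟩ :=
      h.exists_lt_norm_add_smul f hx (c := 1 + ‖f‖ - θ) (by linarith) (by linarith)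
    obtain ⟨L, hL, hL_le⟩ := exists_isWeakStarSlice_forall_le_apply (by linarith) hyx
    refine ⟨L, hL, fun g hgL ↦ ?_⟩
    have hg : ‖g‖ ≤ 1 := hL.norm_le_one hgL
    obtain ⟨hgf, hgx⟩ := le_norm_add_and_le_mul_apply hx.le hy.le hg hfy (hL_le g hgL)
    have hx_le : ‖f‖ * (1 - δ) ≤ ‖f‖ * g x := by linarith
    exact ⟨⟨hg, le_of_mul_le_mul_left hx_le hf⟩, (sub_le_sub_left hθη.le _).trans hgf⟩

theorem exists_codirected_of_countable (h : DaugavetProperty X) {K : Set (StrongDual ℝ X)}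
    (hK : IsWeakStarSlice K) {D : Set (StrongDual ℝ X)} (hD : D.Countable) :
    ∃ g ∈ K, ∀ f ∈ D, ‖g + f‖ = 1 + ‖f‖ := by
  have : Countable D := hD.to_subtype
  obtain ⟨g, hgK, hg⟩ := hK.inter_iInter_nonempty fun (i : D × ℕ) _ hL ↦
    h.exists_isWeakStarSlice_subset_inter hL i.1.1 (Nat.one_div_pos_of_nat (n := i.2))
  rw [Set.mem_iInter] at hg
  refine ⟨g, hgK, fun f hf ↦ le_antisymm ?_ ?_⟩
  · exact (norm_add_le g f).trans (by gcongr; exact hK.norm_le_one hgK)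
  · have hlim : Tendsto (fun n : ℕ ↦ 1 + ‖f‖ - 1 / ((n : ℝ) + 1)) atTop (𝓝 (1 + ‖f‖)) := by
      simpa only [sub_zero] using tendsto_one_div_add_atTop_nhds_zero_nat.const_sub (1 + ‖f‖)
    exact le_of_tendsto' hlim fun n ↦ hg (⟨f, hf⟩, n)

end DaugavetProperty

theorem daugavet_codirected_functional_separable_general (h : DaugavetProperty X) {x : X}
    (hx : ‖x‖ = 1) {ε : ℝ} (hε : 0 < ε) {S : Set (StrongDual ℝ X)}
    (hS : TopologicalSpace.IsSeparable S) :
    ∃ xs : StrongDual ℝ X, ‖xs‖ = 1 ∧ xs x ≥ 1 - ε ∧ ∀ f ∈ S, ‖xs + f‖ = 1 + ‖f‖ := by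
  obtain ⟨D, hD, hSD⟩ := hS
  obtain ⟨g, ⟨-, hgx⟩, hgD⟩ :=
    h.exists_codirected_of_countable ⟨x, ε, hx, hε, rfl⟩ (hD.insert 0)
  have hclosed : IsClosed {f : StrongDual ℝ X | ‖g + f‖ = 1 + ‖f‖} :=
    isClosed_eq (by fun_prop) (by fun_prop)
  refine ⟨g, ?_, hgx, fun f hf ↦ ?_⟩
  · simpa only [norm_zero, add_zero] using hgD 0 (Set.mem_insert 0 D)
  · exact closure_minimal (fun f hf ↦ hgD f (Set.mem_insert_of_mem 0 hf)) hclosed (hSD hf)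

end

/-- In a normed space with the Daugavet property, for every point of the unit sphere,
every `ε > 0` and every separable subspace `V` of the dual, there is a norm-one
functional almost attaining its norm at the point and codirected with every `f ∈ V`. -/
theorem daugavet_codirected_functional_separable
    (X : Type*) [NormedAddCommGroup X] [NormedSpace ℝ X] (h : DaugavetProperty X)
    (x : X) (hx : ‖x‖ = 1) (ε : ℝ) (hε : 0 < ε)
    (V : Submodule ℝ (X →L[ℝ] ℝ))
    (hV : TopologicalSpace.IsSeparable (V : Set (X →L[ℝ] ℝ))) :
    ∃ xs : X →L[ℝ] ℝ, ‖xs‖ = 1 ∧ xs x ≥ 1 - ε ∧ ∀ f ∈ V, ‖xs + f‖ = 1 + ‖f‖ :=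
  daugavet_codirected_functional_separable_general h hx hε hV
end

section
/- If X is a normed space with the Daugavet property, then the dual norm of X* is not Gâteaux differentiable at any nonzero point; that is, X* has no smooth points. -/
open Filter Topology

/-- A nonzero point `y` of a normed space is a smooth point (the norm is Gâteaux
differentiable at `y`) if `(‖y + t h‖ + ‖y - t h‖ - 2‖y‖)/t → 0` as `t → 0`,
for every `h` in the unit sphere. -/
def SmoothPoint (Y : Type*) [SeminormedAddCommGroup Y] [NormedSpace ℝ Y] (y : Y) : Prop :=
  ∀ h : Y, ‖h‖ = 1 →
    Tendsto (fun t : ℝ => (‖y + t • h‖ + ‖y - t • h‖ - 2 * ‖y‖) / t) (𝓝[≠] (0 : ℝ)) (𝓝 0)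

/-!
Applying the Daugavet equation to `f ⊗ x`, with `‖f‖ = 1`, yields a `y` in the unit ball which
almost norms `f` and satisfies `‖x + y‖ ≈ ‖x‖ + 1`. A functional `g` of norm at most one that almost
norms `x + y` almost norms both `x` and `y`, so that `‖f + g‖ ≥ f y + g y ≈ 2`. Iterating gives a
decreasing sequence of weak-* slices of the dual ball on which `‖fₙ + g‖` is arbitrarily close to
`2`, and Banach-Alaoglu provides a common point. If each of `f` and `-f` occurs infinitely often
among the `fₙ`, then `‖f + g‖ = ‖f - g‖ = 2`: the norm has a corner at `f` in the direction `g`.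
-/

section Seminormed

variable {X Y : Type*} [SeminormedAddCommGroup X] [NormedSpace ℝ X]
  [SeminormedAddCommGroup Y] [NormedSpace ℝ Y]

theorem norm_smul_add_smul_of_norm_add_eq {x y : X} (h : ‖x + y‖ = ‖x‖ + ‖y‖) {a b : ℝ}
    (ha : 0 ≤ a) (hb : 0 ≤ b) : ‖a • x + b • y‖ = a * ‖x‖ + b * ‖y‖ := by
  wlog hab : a ≤ b generalizing x y a b
  · rw [add_comm, this (by rwa [add_comm y, add_comm ‖y‖]) hb ha (le_of_not_ge hab), add_comm]
  have hx : ‖a • x‖ = a * ‖x‖ := norm_smul_of_nonneg ha x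
  have hy : ‖b • y‖ = b * ‖y‖ := norm_smul_of_nonneg hb y
  refine le_antisymm (hx ▸ hy ▸ norm_add_le _ _) ?_
  have hsum : b * (‖x‖ + ‖y‖) ≤ ‖a • x + b • y‖ + (b - a) * ‖x‖ :=
    calc b * (‖x‖ + ‖y‖) = ‖(a • x + b • y) + (b - a) • x‖ := by
          rw [← h, ← norm_smul_of_nonneg hb]; congr 1; module
      _ ≤ ‖a • x + b • y‖ + (b - a) * ‖x‖ := by
          rw [← norm_smul_of_nonneg (sub_nonneg.2 hab)]; exact norm_add_le _ _
  linarith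

theorem not_smoothPoint_of_norm_add_eq_of_norm_sub_eq {v g : Y} (hg : ‖g‖ = 1)
    (hadd : ‖v + g‖ = ‖v‖ + 1) (hsub : ‖v - g‖ = ‖v‖ + 1) : ¬ SmoothPoint Y v := by
  intro hv
  have norm_add_smul {k : Y} (hk : ‖k‖ = 1) (hvk : ‖v + k‖ = ‖v‖ + 1) {t : ℝ} (ht : 0 ≤ t) :
      ‖v + t • k‖ = ‖v‖ + t := by
    rw [← hk] at hvk
    simpa only [one_smul, one_mul, hk, mul_one] using
      norm_smul_add_smul_of_norm_add_eq hvk zero_le_one ht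
  have hquot : ∀ t > 0, (‖v + t • g‖ + ‖v - t • g‖ - 2 * ‖v‖) / t = 2 := by
    intro t ht
    rw [sub_eq_add_neg v (t • g), ← smul_neg, norm_add_smul hg hadd ht.le,
      norm_add_smul (by rwa [norm_neg]) (by rwa [← sub_eq_add_neg]) ht.le, div_eq_iff ht.ne']
    ring
  have hzero : Tendsto (fun t : ℝ => (‖v + t • g‖ + ‖v - t • g‖ - 2 * ‖v‖) / t) (𝓝[>] 0) (𝓝 0) :=
    (hv g hg).mono_left (nhdsWithin_mono 0 fun _ ht => ne_of_gt ht)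
  have htwo : Tendsto (fun t : ℝ => (‖v + t • g‖ + ‖v - t • g‖ - 2 * ‖v‖) / t) (𝓝[>] 0) (𝓝 2) :=
    tendsto_const_nhds.congr' (eventually_mem_nhdsWithin.mono fun t ht => (hquot t ht).symm)
  exact two_ne_zero (tendsto_nhds_unique htwo hzero)

theorem apply_le_norm_of_opNorm_le_one {f : StrongDual ℝ X} (hf : ‖f‖ ≤ 1) (x : X) : f x ≤ ‖x‖ :=
  (Real.le_norm_self _).trans (by simpa only [one_mul] using f.le_of_opNorm_le hf x)

theorem exists_norm_le_one_nonneg_apply_lt_norm_apply (f : StrongDual ℝ X) (T : X →L[ℝ] Y) {r : ℝ}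
    (hr : r < ‖T‖) : ∃ y : X, ‖y‖ ≤ 1 ∧ 0 ≤ f y ∧ r < ‖T y‖ := by
  obtain ⟨y, hy, hTy⟩ : ∃ y : X, ‖y‖ ≤ 1 ∧ r < ‖T y‖ := by
    rcases lt_or_ge r 0 with hr0 | hr0
    · exact ⟨0, by simp, by simpa using hr0⟩
    · by_contra! hT
      exact hr.not_ge (T.opNorm_le_of_unit_norm hr0 fun y hy => hT y hy.le)
  rcases le_total 0 (f y) with hfy | hfy
  · exact ⟨y, hy, hfy, hTy⟩
  · exact ⟨-y, by rwa [norm_neg], by simpa using hfy, by rwa [map_neg, norm_neg]⟩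

/-- The weak-* slice of the closed unit ball of the dual determined by `x : X`, consisting of the
functionals whose value at `x` is within `ε` of the maximal value `‖x‖`. The vector `x` is not
normalised, so `ε` is an absolute tolerance. -/
def weakStarSlice (x : X) (ε : ℝ) : Set (StrongDual ℝ X) :=
  {g | ‖g‖ ≤ 1 ∧ ‖x‖ - ε ≤ g x}

theorem weakStarSlice_nonempty (x : X) {ε : ℝ} (hε : 0 ≤ ε) : (weakStarSlice x ε).Nonempty := by
  obtain ⟨g, hg, hgx⟩ := exists_dual_vector'' ℝ x
  exact ⟨g, hg, by rw [hgx]; exact sub_le_self _ hε⟩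

theorem isClosed_toStrongDual_preimage_weakStarSlice (x : X) (ε : ℝ) :
    IsClosed (WeakDual.toStrongDual ⁻¹' weakStarSlice x ε) := by
  have hball := WeakDual.isClosed_closedBall (0 : StrongDual ℝ X) 1
  simp only [Metric.closedBall, dist_zero_right] at hball
  exact hball.inter (isClosed_le continuous_const (WeakDual.eval_continuous x))

theorem isCompact_toStrongDual_preimage_weakStarSlice (x : X) (ε : ℝ) :
    IsCompact (WeakDual.toStrongDual ⁻¹' weakStarSlice x ε) :=
  (WeakDual.isCompact_closedBall (0 : StrongDual ℝ X) 1).of_isClosed_subset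
    (isClosed_toStrongDual_preimage_weakStarSlice x ε) fun _ hg => mem_closedBall_zero_iff.2 hg.1

theorem nonempty_iInter_weakStarSlice {x : ℕ → X} {ε : ℕ → ℝ} (hε : ∀ n, 0 ≤ ε n)
    (hx : ∀ n, weakStarSlice (x (n + 1)) (ε (n + 1)) ⊆ weakStarSlice (x n) (ε n)) :
    (⋂ n, weakStarSlice (x n) (ε n)).Nonempty := by
  obtain ⟨g, hg⟩ := IsCompact.nonempty_iInter_of_sequence_nonempty_isCompact_isClosed
    (fun n => WeakDual.toStrongDual ⁻¹' weakStarSlice (x n) (ε n))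
    (fun n => Set.preimage_mono (hx n))
    (fun n => (weakStarSlice_nonempty (x n) (hε n)).preimage WeakDual.toStrongDual.surjective)
    (isCompact_toStrongDual_preimage_weakStarSlice _ _)
    (fun n => isClosed_toStrongDual_preimage_weakStarSlice _ _)
  exact ⟨WeakDual.toStrongDual g, Set.mem_iInter.2 (Set.mem_iInter.1 hg)⟩

theorem weakStarSlice_add_subset {x y : X} {δ : ℝ} (h : ‖x‖ + ‖y‖ - δ ≤ ‖x + y‖) (ε : ℝ) :
    weakStarSlice (x + y) ε ⊆ weakStarSlice x (ε + δ) := by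
  rintro g ⟨hg, hgxy⟩
  have hgy : g y ≤ ‖y‖ := apply_le_norm_of_opNorm_le_one hg y
  rw [map_add] at hgxy
  exact ⟨hg, by linarith⟩

namespace DaugavetProperty

theorem exists_le_apply_le_norm_add (h : DaugavetProperty X) {f : StrongDual ℝ X} (hf : ‖f‖ = 1)
    (x : X) {δ : ℝ} (hδ : 0 < δ) : ∃ y : X, ‖y‖ ≤ 1 ∧ 1 - δ ≤ f y ∧ ‖x‖ + 1 - δ ≤ ‖x + y‖ := by
  have apply_le_norm (y : X) : f y ≤ ‖y‖ := apply_le_norm_of_opNorm_le_one hf.le y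
  rcases (norm_nonneg x).eq_or_lt with hx | hx
  · obtain ⟨y, hy, hfy, hlt⟩ :=
      exists_norm_le_one_nonneg_apply_lt_norm_apply f f (r := 1 - δ) (by linarith)
    rw [Real.norm_of_nonneg hfy] at hlt
    have htri : ‖y‖ ≤ ‖x + y‖ + ‖x‖ := by simpa using norm_sub_le (x + y) x
    exact ⟨y, hy, hlt.le, by linarith [apply_le_norm y]⟩
  obtain ⟨η, hη, hηx, hηδ⟩ : ∃ η > 0, η ≤ δ * ‖x‖ ∧ 2 * η ≤ δ :=
    ⟨min (δ * ‖x‖) (δ / 2), by positivity, min_le_left _ _,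
      by linarith [min_le_right (δ * ‖x‖) (δ / 2)]⟩
  have hnorm : ‖ContinuousLinearMap.id ℝ X + f.smulRight x‖ = 1 + ‖x‖ := by
    rw [h f x, ContinuousLinearMap.norm_smulRight_apply, hf, one_mul]
  obtain ⟨y, hy, hfy, hlt⟩ := exists_norm_le_one_nonneg_apply_lt_norm_apply f
    (ContinuousLinearMap.id ℝ X + f.smulRight x) (r := 1 + ‖x‖ - η) (by linarith)
  replace hlt : 1 + ‖x‖ - η < ‖y + f y • x‖ := by simpa using hlt
  have hupper : ‖y + f y • x‖ ≤ ‖y‖ + f y * ‖x‖ := by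
    simpa [norm_smul_of_nonneg hfy] using norm_add_le y (f y • x)
  have hdefect : (1 - f y) * ‖x‖ ≤ η := by linarith
  have hcompare : ‖y + f y • x‖ ≤ ‖x + y‖ + (1 - f y) * ‖x‖ :=
    calc ‖y + f y • x‖ = ‖(x + y) - (1 - f y) • x‖ := by congr 1; module
      _ ≤ ‖x + y‖ + (1 - f y) * ‖x‖ := by
        rw [← norm_smul_of_nonneg (by linarith [apply_le_norm y])]; exact norm_sub_le _ _
  have happly : 1 - f y ≤ δ := le_of_mul_le_mul_right (hdefect.trans hηx) hx
  exact ⟨y, hy, by linarith, by linarith⟩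

theorem exists_weakStarSlice_subset (h : DaugavetProperty X) {f : StrongDual ℝ X} (hf : ‖f‖ = 1)
    (x : X) {ε : ℝ} (hε : 0 < ε) :
    ∃ x' : X, weakStarSlice x' (ε / 2) ⊆ weakStarSlice x ε ∧
      ∀ g ∈ weakStarSlice x' (ε / 2), 2 - 2 * ε ≤ ‖f + g‖ := by
  obtain ⟨y, hy, hfy, hxy⟩ := h.exists_le_apply_le_norm_add hf x (δ := ε / 4) (by positivity)
  have hsubset : weakStarSlice (x + y) (ε / 2) ⊆ weakStarSlice x (ε / 2 + ε / 4) :=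
    weakStarSlice_add_subset (by linarith) _
  have hsubset' : weakStarSlice (x + y) (ε / 2) ⊆ weakStarSlice y (ε / 2 + ε / 4) := by
    rw [add_comm x y] at hxy ⊢
    exact weakStarSlice_add_subset (by linarith) _
  refine ⟨x + y, fun g hg => ⟨hg.1, by linarith [(hsubset hg).2]⟩, fun g hg => ?_⟩
  calc 2 - 2 * ε ≤ (f + g) y := by
        have hfy_norm : f y ≤ ‖y‖ := apply_le_norm_of_opNorm_le_one hf.le y
        rw [add_apply]
        linarith [(hsubset' hg).2]
    _ ≤ ‖(f + g) y‖ := Real.le_norm_self _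
    _ ≤ ‖f + g‖ := (f + g).unit_le_opNorm y hy

theorem exists_forall_le_norm_add (h : DaugavetProperty X) {f : ℕ → StrongDual ℝ X}
    (hf : ∀ n, ‖f n‖ = 1) :
    ∃ g : StrongDual ℝ X, ‖g‖ ≤ 1 ∧ ∀ n, 2 - 2 * (1 / 2) ^ n ≤ ‖f n + g‖ := by
  choose next hsubset hnorm using fun n x =>
    h.exists_weakStarSlice_subset (hf n) x (ε := (1 / 2) ^ n) (by positivity)
  let x : ℕ → X := Nat.rec 0 next
  have half_pow (n : ℕ) : (1 / 2 : ℝ) ^ n / 2 = (1 / 2) ^ (n + 1) := by ring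
  simp only [half_pow] at hsubset hnorm
  obtain ⟨g, hg⟩ := nonempty_iInter_weakStarSlice (x := x) (ε := fun n => (1 / 2) ^ n)
    (fun n => by positivity) (fun n => hsubset n (x n))
  rw [Set.mem_iInter] at hg
  exact ⟨g, (hg 0).1, fun n => hnorm n (x n) g (hg (n + 1))⟩

theorem exists_norm_add_eq_two (h : DaugavetProperty X) {ι : Type*} [Countable ι] [Nonempty ι]
    {f : ι → StrongDual ℝ X} (hf : ∀ i, ‖f i‖ = 1) :
    ∃ g : StrongDual ℝ X, ‖g‖ = 1 ∧ ∀ i, ‖f i + g‖ = 2 := by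
  obtain ⟨e, he⟩ := exists_surjective_nat ι
  -- Along `n ↦ e n.unpair.1` every index occurs infinitely often.
  obtain ⟨g, hg, hfg⟩ := h.exists_forall_le_norm_add (f := fun n => f (e n.unpair.1))
    fun n => hf _
  have two_le (i : ι) : 2 ≤ ‖f i + g‖ := by
    obtain ⟨m, rfl⟩ := he i
    have hlim : Tendsto (fun k : ℕ => 2 - 2 * (1 / 2 : ℝ) ^ k) atTop (𝓝 2) := by
      simpa using ((tendsto_pow_atTop_nhds_zero_of_lt_one (by norm_num)
        (one_half_lt_one (α := ℝ))).const_mul 2).const_sub 2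
    have hpair : Tendsto (Nat.pair m) atTop atTop :=
      tendsto_atTop_mono (Nat.right_le_pair m) tendsto_id
    exact le_of_tendsto' (hlim.comp hpair) fun k => by simpa using hfg (Nat.pair m k)
  have le_add (i : ι) : ‖f i + g‖ ≤ 1 + ‖g‖ := hf i ▸ norm_add_le (f i) g
  have hg_one : ‖g‖ = 1 := by
    obtain ⟨i⟩ := ‹Nonempty ι›
    linarith [two_le i, le_add i]
  exact ⟨g, hg_one, fun i => by linarith [two_le i, le_add i]⟩

theorem exists_norm_add_eq_norm_add_one (h : DaugavetProperty X) {ι : Type*} [Countable ι]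
    [Nonempty ι] {v : ι → StrongDual ℝ X} (hv : ∀ i, v i ≠ 0) :
    ∃ g : StrongDual ℝ X, ‖g‖ = 1 ∧ ∀ i, ‖v i + g‖ = ‖v i‖ + 1 := by
  have norm_ne_zero (i : ι) : ‖v i‖ ≠ 0 := fun hzero => hv i <| by
    ext x
    simpa [hzero] using (v i).le_opNorm x
  have hunit (i : ι) : ‖‖v i‖⁻¹ • v i‖ = 1 := by
    rw [norm_smul, norm_inv, norm_norm, inv_mul_cancel₀ (norm_ne_zero i)]
  obtain ⟨g, hg, hvg⟩ := h.exists_norm_add_eq_two hunit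
  refine ⟨g, hg, fun i => ?_⟩
  have hadd : ‖‖v i‖⁻¹ • v i + g‖ = ‖‖v i‖⁻¹ • v i‖ + ‖g‖ := by
    rw [hvg, hunit, hg, one_add_one_eq_two]
  simpa only [smul_inv_smul₀ (norm_ne_zero i), one_smul, hunit, hg, mul_one] using
    norm_smul_add_smul_of_norm_add_eq hadd (norm_nonneg (v i)) zero_le_one

end DaugavetProperty

theorem daugavet_dual_no_smooth_points_general (h : DaugavetProperty X) {v : StrongDual ℝ X}
    (hv : v ≠ 0) : ¬ SmoothPoint (StrongDual ℝ X) v := by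
  obtain ⟨g, hg, hvg⟩ := h.exists_norm_add_eq_norm_add_one (v := ![v, -v])
    (by simp [Fin.forall_fin_two, hv])
  have hadd : ‖v + g‖ = ‖v‖ + 1 := hvg 0
  have hsub : ‖-v + g‖ = ‖-v‖ + 1 := hvg 1
  rw [norm_neg, neg_add_eq_sub, norm_sub_rev] at hsub
  exact not_smoothPoint_of_norm_add_eq_of_norm_sub_eq hg hadd hsub

end Seminormed

/-- If `X` is a normed space with the Daugavet property, then the dual norm of `X*`
is not Gâteaux differentiable at any nonzero point. -/
theorem daugavet_dual_no_smooth_points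
    (X : Type*) [NormedAddCommGroup X] [NormedSpace ℝ X] (h : DaugavetProperty X)
    (v : X →L[ℝ] ℝ) (hv : v ≠ 0) : ¬ SmoothPoint (X →L[ℝ] ℝ) v :=
  daugavet_dual_no_smooth_points_general h hv
end

section
/- Let X be a Banach space with the Daugavet property. For every sequence (x_i) in the unit sphere of X and every sequence (f_i) in the unit sphere of X* satisfying f_i(x_i) > 1 − 1/i for all i ∈ ℕ, there exists a sequence (g_i) in the unit sphere of X* such that g_i(x_i) > 1 − 1/i and ‖g_i − f_i‖ = 2 for every i ∈ ℕ. -/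
/-!
Starting from `u₀ = x`, the Daugavet property provides increments `yₙ` in the unit ball with
`f yₙ` nearly `-1` and `‖uₙ + yₙ‖` nearly `‖uₙ‖ + 1`, and `uₙ₊₁ = uₙ + yₙ`. When the errors are
summable, a functional nearly norming `uₙ` nearly norms every earlier `uₖ`, so by weak-*
compactness some `g` in the dual unit ball nearly norms all `uₙ` at once, with errors tending
to `0`. Then `g x` is nearly `‖x‖`, and `g yₙ` tends to `1`, so that `(g - f) yₙ` tends to `2`.
-/

section

variable {X : Type*} [SeminormedAddCommGroup X] [NormedSpace ℝ X]

theorem apply_le_norm_of_norm_le_one_s5 {f : X →L[ℝ] ℝ} (hf : ‖f‖ ≤ 1) (y : X) : f y ≤ ‖y‖ :=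
  (le_abs_self _).trans ((f.le_of_opNorm_le hf y).trans_eq (one_mul _))

theorem norm_sub_smul_le_norm_add_add {t : ℝ} (ht : 0 ≤ 1 + t) (u y : X) :
    ‖y - t • u‖ ≤ ‖u + y‖ + (1 + t) * ‖u‖ :=
  calc ‖y - t • u‖ = ‖(u + y) - (1 + t) • u‖ := by congr 1; module
    _ ≤ ‖u + y‖ + ‖(1 + t) • u‖ := norm_sub_le _ _
    _ = ‖u + y‖ + (1 + t) * ‖u‖ := by rw [norm_smul, Real.norm_of_nonneg ht]

theorem exists_norm_le_one_lt_norm_apply {Y : Type*} [SeminormedAddCommGroup Y]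
    [NormedSpace ℝ Y] {T : X →L[ℝ] Y} {r : ℝ} (hr : r < ‖T‖) : ∃ y : X, ‖y‖ ≤ 1 ∧ r < ‖T y‖ := by
  rcases lt_or_ge r 0 with hr_neg | hr_nonneg
  · exact ⟨0, by simp, by simpa using hr_neg⟩
  · by_contra! hT
    exact hr.not_ge (ContinuousLinearMap.opNorm_le_of_unit_norm hr_nonneg fun y hy => hT y hy.le)

theorem exists_norm_le_one_lt_apply {f : X →L[ℝ] ℝ} {r : ℝ} (hr : r < ‖f‖) :
    ∃ y : X, ‖y‖ ≤ 1 ∧ r < f y := by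
  obtain ⟨y, hy, hfy⟩ := exists_norm_le_one_lt_norm_apply hr
  rcases lt_abs.mp hfy with hfy | hfy
  · exact ⟨y, hy, hfy⟩
  · exact ⟨-y, by rwa [norm_neg], by rwa [map_neg]⟩

theorem exists_norm_le_one_forall_norm_sub_le_apply {u : ℕ → X} {δ : ℕ → ℝ} (hδ : ∀ n, 0 ≤ δ n)
    (hu : ∀ n, ‖u n‖ + ‖u (n + 1) - u n‖ + δ (n + 1) ≤ ‖u (n + 1)‖ + δ n) :
    ∃ g : X →L[ℝ] ℝ, ‖g‖ ≤ 1 ∧ ∀ n, ‖u n‖ - δ n ≤ g (u n) := by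
  let B : Set (WeakDual ℝ X) :=
    WeakDual.toStrongDual ⁻¹' Metric.closedBall (0 : StrongDual ℝ X) 1
  let K : ℕ → Set (WeakDual ℝ X) := fun n => B ∩ {g | ‖u n‖ - δ n ≤ g (u n)}
  have K_closed (n : ℕ) : IsClosed (K n) :=
    (WeakDual.isClosed_closedBall 0 1).inter
      (isClosed_le continuous_const (WeakDual.eval_continuous (u n)))
  have K_compact : IsCompact (K 0) :=
    (WeakDual.isCompact_closedBall 0 1).of_isClosed_subset (K_closed 0) Set.inter_subset_left
  have K_nonempty (n : ℕ) : (K n).Nonempty := by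
    obtain ⟨g, hg_norm, hg_apply⟩ := exists_dual_vector'' ℝ (u n)
    refine ⟨StrongDual.toWeakDual g, by simpa [B] using hg_norm, ?_⟩
    change ‖u n‖ - δ n ≤ g (u n)
    simpa only [hg_apply, RCLike.ofReal_real_eq_id, id_eq, sub_le_self_iff] using hδ n
  have K_antitone (n : ℕ) : K (n + 1) ⊆ K n := by
    rintro g ⟨hgB, hg : ‖u (n + 1)‖ - δ (n + 1) ≤ g (u (n + 1))⟩
    refine ⟨hgB, show ‖u n‖ - δ n ≤ g (u n) from ?_⟩
    have hg_norm : ‖WeakDual.toStrongDual g‖ ≤ 1 := by simpa [B] using hgB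
    have hg_diff : g (u (n + 1) - u n) ≤ ‖u (n + 1) - u n‖ :=
      apply_le_norm_of_norm_le_one_s5 hg_norm _
    rw [map_sub] at hg_diff
    linarith [hu n]
  obtain ⟨g, hg⟩ := IsCompact.nonempty_iInter_of_sequence_nonempty_isCompact_isClosed
    K K_antitone K_nonempty K_compact K_closed
  rw [Set.mem_iInter] at hg
  exact ⟨WeakDual.toStrongDual g, by simpa [B] using (hg 0).1, fun n => (hg n).2⟩

namespace DaugavetProperty

theorem exists_lt_norm_sub_smul (h : DaugavetProperty X) (f : X →L[ℝ] ℝ) (u : X) {r : ℝ}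
    (hr : r < 1 + ‖f‖ * ‖u‖) : ∃ y : X, ‖y‖ ≤ 1 ∧ f y ≤ 0 ∧ r < ‖y - f y • u‖ := by
  have hT : r < ‖ContinuousLinearMap.id ℝ X + f.smulRight (-u)‖ := by
    rwa [h f (-u), ContinuousLinearMap.norm_smulRight_apply, norm_neg]
  obtain ⟨y, hy, hTy⟩ := exists_norm_le_one_lt_norm_apply hT
  replace hTy : r < ‖y - f y • u‖ := by simpa [sub_eq_add_neg] using hTy
  rcases le_total (f y) 0 with hfy | hfy
  · exact ⟨y, hy, hfy, hTy⟩
  · refine ⟨-y, by rwa [norm_neg], by simpa using hfy, ?_⟩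
    rwa [map_neg, neg_smul, ← neg_sub', norm_neg]

theorem exists_apply_le_norm_add_ge (h : DaugavetProperty X) {f : X →L[ℝ] ℝ} (hf : ‖f‖ = 1)
    (u : X) {ε : ℝ} (hε : 0 < ε) :
    ∃ y : X, ‖y‖ ≤ 1 ∧ f y ≤ ε - 1 ∧ ‖u‖ + 1 - ε ≤ ‖u + y‖ := by
  rcases (norm_nonneg u).eq_or_lt with hu | hu
  · obtain ⟨z, hz, hfz⟩ := exists_norm_le_one_lt_apply (show 1 - ε < ‖f‖ by linarith)
    have norm_le : ‖z‖ ≤ ‖u‖ + ‖u + -z‖ := by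
      simpa only [← sub_eq_add_neg, sub_sub_cancel] using norm_sub_le u (u - z)
    exact ⟨-z, by rwa [norm_neg], by rw [map_neg]; linarith,
      by linarith [apply_le_norm_of_norm_le_one_s5 hf.le z]⟩
  · -- The loss `(1 + f y) * ‖u‖` in the norm of `u + y` is at most the loss `δ * ‖u‖` allowed
    -- for the operator norm, so the total stays below `ε` if `δ * ‖u‖ ≤ ε / 2`.
    obtain ⟨δ, hδ, hδε, hδu⟩ : ∃ δ, 0 < δ ∧ δ ≤ ε ∧ δ * ‖u‖ ≤ ε / 2 :=
      ⟨min ε (ε / 2 / ‖u‖), by positivity, min_le_left _ _,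
        (le_div_iff₀ hu).mp (min_le_right _ _)⟩
    have hr : 1 + ‖u‖ - δ * ‖u‖ < 1 + ‖f‖ * ‖u‖ := by
      rw [hf, one_mul]
      exact sub_lt_self _ (mul_pos hδ hu)
    obtain ⟨y, hy, hfy, hlt⟩ := h.exists_lt_norm_sub_smul f u hr
    have one_add_apply_lt : 1 + f y < δ := by
      have norm_le : ‖y - f y • u‖ ≤ ‖y‖ + -f y * ‖u‖ := by
        simpa only [norm_smul, Real.norm_of_nonpos hfy] using norm_sub_le y (f y • u)
      exact lt_of_mul_lt_mul_right (by linarith) hu.le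
    have one_add_apply_nonneg : 0 ≤ 1 + f y := by
      have neg_apply_le : -f y ≤ ‖y‖ := by
        simpa only [map_neg, norm_neg] using apply_le_norm_of_norm_le_one_s5 hf.le (-y)
      linarith
    have norm_le : ‖y - f y • u‖ ≤ ‖u + y‖ + (1 + f y) * ‖u‖ :=
      norm_sub_smul_le_norm_add_add one_add_apply_nonneg u y
    have loss_le : (1 + f y) * ‖u‖ ≤ δ * ‖u‖ := by gcongr
    exact ⟨y, hy, by linarith, by linarith⟩

theorem exists_seq_norm_succ_ge (h : DaugavetProperty X) {f : X →L[ℝ] ℝ} (hf : ‖f‖ = 1)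
    (x : X) {ε : ℕ → ℝ} (hε : ∀ n, 0 < ε n) :
    ∃ u : ℕ → X, u 0 = x ∧ ∀ n, ‖u (n + 1) - u n‖ ≤ 1 ∧ f (u (n + 1) - u n) ≤ ε n - 1 ∧
      ‖u n‖ + 1 - ε n ≤ ‖u (n + 1)‖ := by
  choose y hy using fun n v => h.exists_apply_le_norm_add_ge hf v (hε n)
  let u : ℕ → X := fun n => Nat.rec x (fun k v => v + y k v) n
  exact ⟨u, rfl, fun n => by simpa only [u, add_sub_cancel_left] using hy n (u n)⟩

end DaugavetProperty

theorem daugavet_almost_norming_far_functionals_general (h : DaugavetProperty X)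
    {f : X →L[ℝ] ℝ} (hf : ‖f‖ = 1) (x : X) {ε : ℝ} (hε : 0 < ε) :
    ∃ g : X →L[ℝ] ℝ, ‖g‖ = 1 ∧ ‖x‖ - ε < g x ∧ ‖g - f‖ = 2 := by
  let δ : ℕ → ℝ := fun n => ε / 2 * (1 / 2) ^ n
  have δ_pos (n : ℕ) : 0 < δ n := by positivity
  have δ_succ (n : ℕ) : δ (n + 1) = δ n / 2 := by simp only [δ, pow_succ]; ring
  have δ_tendsto : Filter.Tendsto (fun n => 2 - 2 * δ n) Filter.atTop (nhds 2) := by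
    have tendsto_pow : Filter.Tendsto (fun n : ℕ => (1 / 2 : ℝ) ^ n) Filter.atTop (nhds 0) :=
      tendsto_pow_atTop_nhds_zero_of_lt_one (by norm_num) (by norm_num)
    simpa only [mul_zero, sub_zero] using ((tendsto_pow.const_mul (ε / 2)).const_mul 2).const_sub 2
  obtain ⟨u, rfl, hu⟩ := h.exists_seq_norm_succ_ge hf x fun n => δ_pos (n + 1)
  obtain ⟨g, hg, hgu⟩ := exists_norm_le_one_forall_norm_sub_le_apply (u := u)
    (fun n => (δ_pos n).le) fun n => by linarith [hu n, δ_succ n]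
  have le_norm_sub (n : ℕ) : 2 - 2 * δ n ≤ ‖g - f‖ := by
    obtain ⟨hy, hfy, hyu⟩ := hu n
    have hgy : ‖u n‖ + 1 - δ n - g (u n) ≤ g (u (n + 1) - u n) := by
      rw [map_sub]
      linarith [hgu (n + 1), δ_succ n]
    have hgn : g (u n) ≤ ‖u n‖ := apply_le_norm_of_norm_le_one_s5 hg (u n)
    calc 2 - 2 * δ n ≤ (g - f) (u (n + 1) - u n) := by
          rw [sub_apply]
          linarith [δ_succ n, δ_pos n]
      _ ≤ ‖g - f‖ := (le_abs_self _).trans ((g - f).unit_le_opNorm _ hy)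
  have two_le : 2 ≤ ‖g - f‖ := le_of_tendsto' δ_tendsto le_norm_sub
  have le_add : ‖g - f‖ ≤ ‖g‖ + 1 := hf ▸ norm_sub_le g f
  have δ_zero : δ 0 = ε / 2 := by simp only [δ, pow_zero, mul_one]
  exact ⟨g, by linarith, by linarith [hgu 0], by linarith⟩

end

/-- In a Banach space with the Daugavet property, for every sequence `(xᵢ)` in the unit
sphere and every sequence `(fᵢ)` of norm-one functionals with `fᵢ(xᵢ) > 1 - 1/i`,
there is a sequence `(gᵢ)` of norm-one functionals with `gᵢ(xᵢ) > 1 - 1/i` and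
`‖gᵢ - fᵢ‖ = 2` for every `i ≥ 1`. -/
theorem daugavet_almost_norming_far_functionals
    (X : Type*) [NormedAddCommGroup X] [NormedSpace ℝ X] [CompleteSpace X]
    (h : DaugavetProperty X)
    (x : ℕ → X) (f : ℕ → (X →L[ℝ] ℝ))
    (hx : ∀ i : ℕ, 1 ≤ i → ‖x i‖ = 1)
    (hf : ∀ i : ℕ, 1 ≤ i → ‖f i‖ = 1)
    (hfx : ∀ i : ℕ, 1 ≤ i → f i (x i) > 1 - 1 / (i : ℝ)) :
    ∃ g : ℕ → (X →L[ℝ] ℝ), ∀ i : ℕ, 1 ≤ i →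
      ‖g i‖ = 1 ∧ g i (x i) > 1 - 1 / (i : ℝ) ∧ ‖g i - f i‖ = 2 := by
  choose! g hg using fun i (hi : 1 ≤ i) =>
    daugavet_almost_norming_far_functionals_general h (hf i hi) (x i) (ε := 1 / i) (by positivity)
  exact ⟨g, fun i hi => hx i hi ▸ hg i hi⟩
end

section
/- There exists a linear subspace X of L¹[0,1] that is not closed in L¹[0,1], such that X (with the induced norm) has the Daugavet property, and the norm of X is Gâteaux differentiable at every nonzero point of X (i.e., X consists entirely of smooth points). -/
open MeasureTheory Filter Topology

/-- Lebesgue measure restricted to `[0,1]`. -/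
noncomputable def mu01 : Measure ℝ := volume.restrict (Set.Icc 0 1)

open scoped ENNReal

/-!
The classes of polynomials form a dense proper subspace of `L¹[0,1]`, hence one that is not closed.
A nonzero polynomial vanishes only on a null set, and every `f ∈ L¹(μ)` with `f ≠ 0` almost
everywhere is a smooth point: `|a + b| + |a - b| - 2|a| = 2(|b| - |a|)⁺`, so the difference quotient
at `f` in the direction `h` is `2 ∫ (|s h| - |f|)⁺ / s`, which tends to `0` by dominated
convergence.

The Daugavet property passes from a space to its dense subspaces, so it remains to prove it for
`L¹(μ)`. If `1_s x` has norm at most `ε`, then `1_s y` and `F (1_s y) x` are almost disjointly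
supported, so the norm of their sum is `‖1_s y‖ + |F (1_s y)| ‖x‖` up to an error of
`2 ε ‖F‖ ‖1_s y‖`. As `μ` has no atoms, the whole space is a finite disjoint union of such sets `s`,
and adding up the estimates gives `‖y‖ + |F y| ‖x‖ ≤ (‖Id + F ⊗ x‖ + 2 ε ‖F‖) ‖y‖`.
-/

section Daugavet

variable {E : Type*} [SeminormedAddCommGroup E] [NormedSpace ℝ E]

lemma norm_id_add_eq_of_le {T : E →L[ℝ] E}
    (h : 1 + ‖T‖ ≤ ‖ContinuousLinearMap.id ℝ E + T‖) :
    ‖ContinuousLinearMap.id ℝ E + T‖ = 1 + ‖T‖ :=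
  le_antisymm ((norm_add_le _ _).trans (by gcongr; exact ContinuousLinearMap.norm_id_le)) h

lemma norm_id_add_eq_of_forall_le [NontrivialTopology E] {T : E →L[ℝ] E}
    (h : ∀ y, ‖y‖ + ‖T y‖ ≤ ‖ContinuousLinearMap.id ℝ E + T‖ * ‖y‖) :
    ‖ContinuousLinearMap.id ℝ E + T‖ = 1 + ‖T‖ := by
  set C := ‖ContinuousLinearMap.id ℝ E + T‖
  have one_le : 1 ≤ C := by
    obtain ⟨y, hy⟩ := exists_norm_ne_zero E
    refine le_of_mul_le_mul_right ?_ ((norm_nonneg y).lt_of_ne' hy)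
    linarith [h y, norm_nonneg (T y)]
  have norm_T_le : ‖T‖ ≤ C - 1 :=
    T.opNorm_le_bound (sub_nonneg.2 one_le) fun y ↦ by linarith [h y]
  exact norm_id_add_eq_of_le (by linarith)

theorem DaugavetProperty.of_dense {S : Submodule ℝ E} (hS : Dense (S : Set E))
    (hE : DaugavetProperty E) : DaugavetProperty S := by
  intro f x
  obtain ⟨F, hF, hFf⟩ := exists_extension_norm_eq S f
  refine norm_id_add_eq_of_le ?_
  calc 1 + ‖f.smulRight x‖ = 1 + ‖F.smulRight (x : E)‖ := by
        simp only [ContinuousLinearMap.norm_smulRight_apply, hFf, Submodule.coe_norm]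
    _ = ‖ContinuousLinearMap.id ℝ E + F.smulRight (x : E)‖ := (hE F x).symm
    _ ≤ ‖ContinuousLinearMap.id ℝ S + f.smulRight x‖ := by
        refine ContinuousLinearMap.opNorm_le_bound _
          (ContinuousLinearMap.opNorm_nonneg _) fun z ↦ ?_
        refine hS.induction (fun y hy ↦ ?_) (isClosed_le (by fun_prop) (by fun_prop)) z
        simpa [← hF] using (ContinuousLinearMap.id ℝ S + f.smulRight x).le_opNorm ⟨y, hy⟩

lemma SmoothPoint.of_coe {S : Submodule ℝ E} {y : S} (hy : SmoothPoint E y) : SmoothPoint S y :=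
  fun h hh ↦ hy h hh

end Daugavet

section Smooth

variable {α : Type*} [MeasurableSpace α] {μ : Measure α}

lemma abs_add_add_abs_sub_sub_two_mul_abs (a b : ℝ) :
    |a + b| + |a - b| - 2 * |a| = 2 * (|b| - |a|)⁺ := by
  grind [posPart_def]

lemma norm_add_add_norm_sub_sub_two_mul_norm (f g : Lp ℝ 1 μ) :
    ‖f + g‖ + ‖f - g‖ - 2 * ‖f‖ = 2 * ∫ t, (|g t| - |f t|)⁺ ∂μ := by
  have integrable_norm (u : Lp ℝ 1 μ) : Integrable (fun t ↦ ‖u t‖) μ :=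
    (L1.integrable_coeFn u).norm
  simp only [L1.norm_eq_integral_norm, ← integral_const_mul]
  rw [← integral_add (integrable_norm _) (integrable_norm _), ← integral_sub
    (by exact (integrable_norm _).add (integrable_norm _)) ((integrable_norm _).const_mul 2)]
  refine integral_congr_ae ?_
  filter_upwards [Lp.coeFn_add f g, Lp.coeFn_sub f g] with t h_add h_sub
  simp only [h_add, h_sub, Pi.add_apply, Pi.sub_apply, Real.norm_eq_abs,
    abs_add_add_abs_sub_sub_two_mul_abs]

theorem smoothPoint_of_ae_ne_zero {f : Lp ℝ 1 μ} (hf : ∀ᵐ t ∂μ, f t ≠ 0) :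
    SmoothPoint (Lp ℝ 1 μ) f := by
  intro h _
  have quotient_eq (s : ℝ) : (‖f + s • h‖ + ‖f - s • h‖ - 2 * ‖f‖) / s =
      2 * ∫ t, (|s * h t| - |f t|)⁺ / s ∂μ := by
    rw [norm_add_add_norm_sub_sub_two_mul_norm, integral_div, mul_div_assoc]
    congr 2
    refine integral_congr_ae ?_
    filter_upwards [Lp.coeFn_smul s h] with t ht
    rw [ht, Pi.smul_apply, smul_eq_mul]
  have tendsto_integral : Tendsto (fun s ↦ ∫ t, (|s * h t| - |f t|)⁺ / s ∂μ) (𝓝[≠] 0)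
      (𝓝 (∫ _, 0 ∂μ)) := by
    refine tendsto_integral_filter_of_dominated_convergence (fun t ↦ |h t|) ?_ ?_
      (L1.integrable_coeFn h).abs ?_
    · refine .of_forall fun s ↦ AEMeasurable.aestronglyMeasurable ?_
      have := (Lp.aestronglyMeasurable f).aemeasurable
      have := (Lp.aestronglyMeasurable h).aemeasurable
      simp only [posPart_def, ← Real.norm_eq_abs]
      fun_prop
    · filter_upwards [self_mem_nhdsWithin] with s hs
      refine .of_forall fun t ↦ ?_
      rw [Real.norm_eq_abs, abs_div, div_le_iff₀ (abs_pos.2 hs), abs_of_nonneg (posPart_nonneg _),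
        mul_comm, ← abs_mul]
      exact sup_le (sub_le_self _ (abs_nonneg _)) (abs_nonneg _)
    · filter_upwards [hf] with t ht
      have small : ∀ᶠ s in 𝓝[≠] (0 : ℝ), |s * h t| < |f t| :=
        nhdsWithin_le_nhds <| ContinuousAt.eventually_lt (by fun_prop) (by fun_prop) (by simpa)
      refine tendsto_const_nhds.congr' ?_
      filter_upwards [small] with s hs
      rw [posPart_eq_zero.2 (sub_nonpos.2 hs.le), zero_div]
  simpa only [quotient_eq, integral_zero, mul_zero] using tendsto_integral.const_mul 2

end Smooth

section IndicatorLp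

variable {α E : Type*} [MeasurableSpace α] {μ : Measure α} [NormedAddCommGroup E] {p : ℝ≥0∞}
  {s t : Set α}

/-- The product `1_s f` of an `Lp` function `f` with the indicator function of a measurable
set `s`. It stays in the same space `Lp E p μ`, so that it can be added to functions which do not
vanish outside `s`. -/
noncomputable def indicatorLp (hs : MeasurableSet s) (f : Lp E p μ) : Lp E p μ :=
  ((Lp.memLp f).indicator hs).toLp

lemma coeFn_indicatorLp (hs : MeasurableSet s) (f : Lp E p μ) :
    indicatorLp hs f =ᵐ[μ] s.indicator f :=
  MemLp.coeFn_toLp _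

lemma indicatorLp_univ (f : Lp E p μ) : indicatorLp .univ f = f := by
  refine Lp.ext ?_
  filter_upwards [coeFn_indicatorLp .univ f] with a h
  rw [h, Set.indicator_univ]

lemma indicatorLp_union (hs : MeasurableSet s) (ht : MeasurableSet t) (hst : Disjoint s t)
    (f : Lp E p μ) : indicatorLp (hs.union ht) f = indicatorLp hs f + indicatorLp ht f := by
  refine Lp.ext ?_
  filter_upwards [coeFn_indicatorLp (hs.union ht) f, coeFn_indicatorLp hs f,
    coeFn_indicatorLp ht f, Lp.coeFn_add (indicatorLp hs f) (indicatorLp ht f)]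
    with a h_union h_s h_t h_add
  rw [h_union, h_add, Pi.add_apply, h_s, h_t, Set.indicator_union_of_disjoint hst]

lemma indicatorLp_add_indicatorLp_compl (hs : MeasurableSet s) (f : Lp E p μ) :
    indicatorLp hs f + indicatorLp hs.compl f = f := by
  rw [← indicatorLp_union hs hs.compl disjoint_compl_right]
  simp only [Set.union_compl_self, indicatorLp_univ]

lemma indicatorLp_smul [NormedSpace ℝ E] (hs : MeasurableSet s) (c : ℝ) (f : Lp E p μ) :
    indicatorLp hs (c • f) = c • indicatorLp hs f := by
  refine Lp.ext ?_
  filter_upwards [coeFn_indicatorLp hs (c • f), coeFn_indicatorLp hs f, Lp.coeFn_smul c f,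
    Lp.coeFn_smul c (indicatorLp hs f)] with a h_ind_smul h_ind h_smul h_smul_ind
  rw [h_ind_smul, h_smul_ind, Pi.smul_apply, h_ind, ← Set.indicator_const_smul_apply]
  by_cases ha : a ∈ s <;> simp [ha, h_smul]

lemma enorm_indicatorLp (hs : MeasurableSet s) (f : Lp E 1 μ) :
    ‖indicatorLp hs f‖ₑ = μ.withDensity (fun a ↦ ‖f a‖ₑ) s := by
  rw [withDensity_apply _ hs, indicatorLp, Lp.enorm_toLp, eLpNorm_one_eq_lintegral_enorm,
    ← lintegral_indicator hs]
  simp only [enorm_indicator_eq_indicator_enorm]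

lemma norm_indicatorLp_add_indicatorLp (hs : MeasurableSet s) (ht : MeasurableSet t)
    (hst : Disjoint s t) (f g : Lp E 1 μ) :
    ‖indicatorLp hs f + indicatorLp ht g‖ = ‖indicatorLp hs f‖ + ‖indicatorLp ht g‖ := by
  simp only [L1.norm_eq_integral_norm]
  rw [← integral_add (L1.integrable_coeFn _).norm (L1.integrable_coeFn _).norm]
  refine integral_congr_ae ?_
  filter_upwards [coeFn_indicatorLp hs f, coeFn_indicatorLp ht g,
    Lp.coeFn_add (indicatorLp hs f) (indicatorLp ht g)] with a h_s h_t h_add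
  rw [h_add, Pi.add_apply, h_s, h_t]
  by_cases ha : a ∈ s
  · simp [Set.disjoint_left.1 hst ha]
  · simp [ha]

lemma norm_indicatorLp_union (hs : MeasurableSet s) (ht : MeasurableSet t) (hst : Disjoint s t)
    (f : Lp E 1 μ) :
    ‖indicatorLp (hs.union ht) f‖ = ‖indicatorLp hs f‖ + ‖indicatorLp ht f‖ := by
  rw [indicatorLp_union hs ht hst, norm_indicatorLp_add_indicatorLp hs ht hst]

lemma norm_indicatorLp_add_norm_le (hs : MeasurableSet s) (f g : Lp E 1 μ) :
    ‖indicatorLp hs f‖ + ‖g‖ ≤ ‖indicatorLp hs f + g‖ + 2 * ‖indicatorLp hs g‖ := by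
  have g_eq := indicatorLp_add_indicatorLp_compl hs g
  have norm_g_le : ‖g‖ ≤ ‖indicatorLp hs g‖ + ‖indicatorLp hs.compl g‖ := by
    simpa only [g_eq] using norm_add_le (indicatorLp hs g) (indicatorLp hs.compl g)
  have off_s : indicatorLp hs f + indicatorLp hs.compl g =
      indicatorLp hs f + g - indicatorLp hs g := by
    rw [add_sub_assoc, ← eq_sub_of_add_eq' g_eq]
  have norm_off_s := norm_indicatorLp_add_indicatorLp hs hs.compl disjoint_compl_right f g
  rw [off_s] at norm_off_s
  linarith [norm_sub_le (indicatorLp hs f + g) (indicatorLp hs g)]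

end IndicatorLp

section Atomless

variable {α : Type*} [TopologicalSpace α] [PolishSpace α] [MeasurableSpace α] [BorelSpace α]

theorem univ_induction_of_measure_le (ν : Measure α) [IsFiniteMeasure ν] [NullSingletonClass ν]
    {ε : ℝ≥0∞} (hε : ε ≠ 0) {P : Set α → Prop}
    (small : ∀ s, MeasurableSet s → ν s ≤ ε → P s)
    (union : ∀ s t, MeasurableSet s → MeasurableSet t → Disjoint s t → P s → P t → P (s ∪ t)) :
    P Set.univ := by
  -- `P` need not pass to subsets, as compactness induction requires, but `Q` does.
  let Q (s : Set α) : Prop := ∃ u, s ⊆ u ∧ MeasurableSet u ∧ ∀ v ⊆ u, MeasurableSet v → P v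
  have Q_of_small {u : Set α} (hu : MeasurableSet u) (hνu : ν u ≤ ε) : Q u :=
    ⟨u, subset_rfl, hu, fun v hvu hv ↦ small v hv ((measure_mono hvu).trans hνu)⟩
  have Q_union ⦃s t : Set α⦄ : Q s → Q t → Q (s ∪ t) := by
    rintro ⟨u, hsu, hu, hPu⟩ ⟨v, htv, hv, hPv⟩
    refine ⟨u ∪ v, Set.union_subset_union hsu htv, hu.union hv, fun w hw hw_meas ↦ ?_⟩
    rw [← Set.inter_union_sdiff w u]
    have hwu := hw_meas.inter hu
    have hwv := hw_meas.diff hu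
    exact union _ _ hwu hwv (Set.disjoint_sdiff_right.mono_left Set.inter_subset_right)
      (hPu _ Set.inter_subset_right hwu) (hPv _ (Set.sdiff_subset_iff.2 hw) hwv)
  obtain ⟨K, -, hK, hνK⟩ :=
    MeasurableSet.univ.exists_isCompact_sdiff_lt (measure_ne_top ν _) hε
  have Q_compact : Q K := by
    refine hK.induction_on (Q_of_small .empty (by simp)) ?_ Q_union fun x _ ↦ ?_
    · rintro s t hst ⟨u, htu, hu⟩
      exact ⟨u, hst.trans htu, hu⟩
    · obtain ⟨U, hxU, hU, hνU⟩ := Set.exists_isOpen_le_add {x} ν hε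
      rw [measure_singleton, zero_add] at hνU
      exact ⟨U, mem_nhdsWithin_of_mem_nhds (hU.mem_nhds (hxU rfl)),
        Q_of_small hU.measurableSet hνU⟩
  obtain ⟨u, hu_univ, -, hPu⟩ := Q_union Q_compact (Q_of_small
    (MeasurableSet.univ.diff hK.measurableSet) hνK.le)
  exact hPu _ (by simpa using hu_univ) .univ

lemma exists_measurableSet_measure_ne_zero_of_nullSingletonClass (μ : Measure α)
    [IsFiniteMeasure μ] [NullSingletonClass μ] [NeZero μ] :
    ∃ s, MeasurableSet s ∧ μ s ≠ 0 ∧ μ sᶜ ≠ 0 := by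
  by_contra! h
  have hμ : μ Set.univ ≠ 0 := NeZero.ne _
  refine hμ (univ_induction_of_measure_le μ (ENNReal.half_pos hμ).ne' (P := (μ · = 0)) ?_ ?_)
  · intro s hs hμs
    by_contra hs0
    have μs_eq : μ s = μ Set.univ := by
      rw [← measure_add_measure_compl hs, h s hs hs0, add_zero]
    exact (ENNReal.half_lt_self hμ (measure_ne_top μ _)).not_ge (μs_eq ▸ hμs)
  · exact fun s t _ _ _ ↦ measure_union_null

lemma exists_Lp_ne_zero_not_ae_ne_zero (p : ℝ≥0∞) (μ : Measure α) [IsFiniteMeasure μ]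
    [NullSingletonClass μ] [NeZero μ] :
    ∃ f : Lp ℝ p μ, f ≠ 0 ∧ ¬ ∀ᵐ t ∂μ, f t ≠ 0 := by
  obtain ⟨s, hs, hμs, hμsc⟩ := exists_measurableSet_measure_ne_zero_of_nullSingletonClass μ
  have coeFn_f := indicatorConstLp_coeFn (p := p) (hs := hs) (hμs := measure_ne_top μ s)
    (c := (1 : ℝ))
  refine ⟨indicatorConstLp p hs (measure_ne_top μ s) 1, fun h ↦ hμs ?_, fun h ↦ hμsc ?_⟩
  · rw [h] at coeFn_f
    refine measure_eq_zero_iff_ae_notMem.2 ?_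
    filter_upwards [coeFn_f] with t ht hts
    simp [hts] at ht
  · refine measure_eq_zero_iff_ae_notMem.2 ?_
    filter_upwards [coeFn_f, h] with t ht h0 hts
    exact h0 (by rw [ht, Set.indicator_of_notMem hts])

variable {μ : Measure α} {E : Type*} [NormedAddCommGroup E] [NormedSpace ℝ E]

lemma norm_add_norm_smul_le_of_pos [NullSingletonClass μ] (F : Lp E 1 μ →L[ℝ] ℝ) (x y : Lp E 1 μ)
    {ε : ℝ} (hε : 0 < ε) :
    ‖y‖ + ‖F y • x‖ ≤
      (‖ContinuousLinearMap.id ℝ (Lp E 1 μ) + F.smulRight x‖ + 2 * ‖F‖ * ε) * ‖y‖ := by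
  set T := ContinuousLinearMap.id ℝ (Lp E 1 μ) + F.smulRight x
  let ν := μ.withDensity fun t ↦ ‖x t‖ₑ
  have : IsFiniteMeasure ν := isFiniteMeasure_withDensity (L1.integrable_coeFn x).2.ne
  let P (s : Set α) : Prop := ∀ hs : MeasurableSet s,
    ‖indicatorLp hs y‖ + ‖F (indicatorLp hs y) • x‖ ≤ (‖T‖ + 2 * ‖F‖ * ε) * ‖indicatorLp hs y‖
  suffices P_univ : P Set.univ by simpa only [indicatorLp_univ] using P_univ .univ
  refine univ_induction_of_measure_le ν (ENNReal.ofReal_pos.2 hε).ne' ?_ ?_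
  · intro s _ hνs hs
    set y_s := indicatorLp hs y
    have norm_x_s_le : ‖indicatorLp hs x‖ ≤ ε := by
      rwa [← ENNReal.ofReal_le_ofReal_iff hε.le, ofReal_norm, enorm_indicatorLp]
    calc ‖y_s‖ + ‖F y_s • x‖ ≤ ‖y_s + F y_s • x‖ + 2 * ‖indicatorLp hs (F y_s • x)‖ :=
          norm_indicatorLp_add_norm_le hs y _
      _ = ‖T y_s‖ + 2 * (‖F y_s‖ * ‖indicatorLp hs x‖) := by
          rw [indicatorLp_smul, norm_smul]; rfl
      _ ≤ ‖T‖ * ‖y_s‖ + 2 * (‖F‖ * ‖y_s‖ * ε) := by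
          gcongr
          exacts [T.le_opNorm _, F.le_opNorm _]
      _ = (‖T‖ + 2 * ‖F‖ * ε) * ‖y_s‖ := by ring
  · intro s t hs ht hst hPs hPt _
    rw [norm_indicatorLp_union hs ht hst, indicatorLp_union hs ht hst, map_add, add_smul]
    linarith [hPs hs, hPt ht, norm_add_le (F (indicatorLp hs y) • x) (F (indicatorLp ht y) • x)]

theorem daugavetProperty_L1 [NullSingletonClass μ] [Nontrivial (Lp E 1 μ)] :
    DaugavetProperty (Lp E 1 μ) := by
  intro F x
  refine norm_id_add_eq_of_forall_le fun y ↦ ?_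
  have tendsto_bound : Tendsto (fun ε : ℝ ↦
      (‖ContinuousLinearMap.id ℝ (Lp E 1 μ) + F.smulRight x‖ + 2 * ‖F‖ * ε) * ‖y‖) (𝓝[>] 0)
      (𝓝 ((‖ContinuousLinearMap.id ℝ (Lp E 1 μ) + F.smulRight x‖ + 2 * ‖F‖ * 0) * ‖y‖)) :=
    (Continuous.tendsto (by fun_prop) 0).mono_left nhdsWithin_le_nhds
  rw [mul_zero, add_zero] at tendsto_bound
  exact ge_of_tendsto tendsto_bound
    (eventually_mem_nhdsWithin.mono fun ε hε ↦ norm_add_norm_smul_le_of_pos F x y hε)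

end Atomless

section Polynomial

open Polynomial

/-- The subspace of `Lp ℝ p μ` consisting of the classes of polynomial functions. It is described
by almost everywhere equality, so that it makes sense even if `μ` has infinite moments. -/
def polynomialLp (p : ℝ≥0∞) (μ : Measure ℝ) : Submodule ℝ (Lp ℝ p μ) where
  carrier := {f | ∃ P : ℝ[X], f =ᵐ[μ] fun t ↦ P.eval t}
  zero_mem' := ⟨0, by simpa using! Lp.coeFn_zero ℝ p μ⟩
  add_mem' := by
    rintro f g ⟨P, hP⟩ ⟨Q, hQ⟩
    refine ⟨P + Q, ?_⟩
    filter_upwards [Lp.coeFn_add f g, hP, hQ] with t h_add hPt hQt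
    rw [h_add, Pi.add_apply, hPt, hQt, eval_add]
  smul_mem' := by
    rintro c f ⟨P, hP⟩
    refine ⟨c • P, ?_⟩
    filter_upwards [Lp.coeFn_smul c f, hP] with t h_smul hPt
    rw [h_smul, Pi.smul_apply, hPt, eval_smul]

variable {p : ℝ≥0∞} {μ : Measure ℝ}

lemma ae_ne_zero_of_mem_polynomialLp [NullSingletonClass μ] {f : Lp ℝ p μ}
    (hf : f ∈ polynomialLp p μ) (hf0 : f ≠ 0) : ∀ᵐ t ∂μ, f t ≠ 0 := by
  obtain ⟨P, hP⟩ := hf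
  have hP0 : P ≠ 0 := by
    rintro rfl
    exact hf0 ((Lp.eq_zero_iff_ae_eq_zero).2 (by simpa using! hP))
  have ae_not_isRoot : ∀ᵐ t ∂μ, ¬ P.IsRoot t :=
    measure_eq_zero_iff_ae_notMem.1 ((finite_setOfPred_isRoot hP0).measure_zero μ)
  filter_upwards [hP, ae_not_isRoot] with t ht hroot
  rwa [ht]

lemma smoothPoint_polynomialLp [NullSingletonClass μ] {f : polynomialLp 1 μ} (hf : f ≠ 0) :
    SmoothPoint (polynomialLp 1 μ) f :=
  .of_coe <| smoothPoint_of_ae_ne_zero <| ae_ne_zero_of_mem_polynomialLp f.2 <| by simpa using hf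

variable [IsFiniteMeasure μ]

lemma memLp_polynomial_eval {a b : ℝ} (hμ : ∀ᵐ t ∂μ, t ∈ Set.Icc a b) (P : ℝ[X]) :
    MemLp (fun t ↦ P.eval t) p μ := by
  obtain ⟨C, hC⟩ := isCompact_Icc.exists_bound_of_continuousOn (s := Set.Icc a b)
    P.continuous.continuousOn
  exact .of_bound P.continuous.aestronglyMeasurable C (hμ.mono hC)

theorem dense_polynomialLp [Fact (1 ≤ p)] (hp : p ≠ ∞) {a b : ℝ}
    (hμ : ∀ᵐ t ∂μ, t ∈ Set.Icc a b) : Dense (polynomialLp p μ : Set (Lp ℝ p μ)) := by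
  refine dense_closure.1 <| (BoundedContinuousFunction.toLp_denseRange ℝ μ ℝ hp).mono ?_
  rintro _ ⟨g, rfl⟩
  refine Metric.mem_closure_iff.2 fun ε hε ↦ ?_
  set c : ℝ := measureUnivNNReal μ ^ p.toReal⁻¹
  obtain ⟨δ, hδ, hcδ⟩ := exists_pos_mul_lt hε c
  obtain ⟨P, hP⟩ := exists_polynomial_near_of_continuousOn a b g g.continuous.continuousOn δ hδ
  have memLp_P : MemLp (fun t ↦ P.eval t) p μ := memLp_polynomial_eval hμ P
  refine ⟨memLp_P.toLp, ⟨P, memLp_P.coeFn_toLp⟩, ?_⟩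
  rw [dist_comm, dist_eq_norm]
  refine (Lp.norm_le_of_ae_bound hδ.le ?_).trans_lt hcδ
  filter_upwards [hμ, memLp_P.coeFn_toLp, BoundedContinuousFunction.coeFn_toLp p μ ℝ g,
    Lp.coeFn_sub memLp_P.toLp (BoundedContinuousFunction.toLp p μ ℝ g)] with t ht hPt hgt h_sub
  rw [h_sub, Pi.sub_apply, hPt, hgt]
  exact (hP t ht).le

lemma not_isClosed_polynomialLp [NullSingletonClass μ] [NeZero μ] [Fact (1 ≤ p)] (hp : p ≠ ∞)
    {a b : ℝ} (hμ : ∀ᵐ t ∂μ, t ∈ Set.Icc a b) :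
    ¬ IsClosed (polynomialLp p μ : Set (Lp ℝ p μ)) := by
  intro hclosed
  obtain ⟨f, hf0, hf⟩ := exists_Lp_ne_zero_not_ae_ne_zero p μ
  have mem_f : f ∈ polynomialLp p μ :=
    hclosed.closure_subset (dense_polynomialLp hp hμ f)
  exact hf (ae_ne_zero_of_mem_polynomialLp mem_f hf0)

lemma daugavetProperty_polynomialLp [NullSingletonClass μ] [NeZero μ]
    {a b : ℝ} (hμ : ∀ᵐ t ∂μ, t ∈ Set.Icc a b) : DaugavetProperty (polynomialLp 1 μ) := by
  obtain ⟨f, hf0, -⟩ := exists_Lp_ne_zero_not_ae_ne_zero 1 μ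
  have : Nontrivial (Lp ℝ 1 μ) := ⟨f, 0, hf0⟩
  exact daugavetProperty_L1.of_dense (dense_polynomialLp ENNReal.one_ne_top hμ)

end Polynomial

theorem exists_smooth_nonclosed_daugavet_subspace_L1_general {μ : Measure ℝ} [IsFiniteMeasure μ]
    [NullSingletonClass μ] [NeZero μ] {a b : ℝ} (hμ : ∀ᵐ t ∂μ, t ∈ Set.Icc a b) :
    ∃ X : Submodule ℝ (Lp ℝ 1 μ),
      ¬ IsClosed (X : Set (Lp ℝ 1 μ)) ∧
      DaugavetProperty ↥X ∧
      ∀ f : ↥X, f ≠ 0 → SmoothPoint ↥X f :=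
  ⟨polynomialLp 1 μ, not_isClosed_polynomialLp ENNReal.one_ne_top hμ,
    daugavetProperty_polynomialLp hμ, fun _ ↦ smoothPoint_polynomialLp⟩

instance : IsFiniteMeasure mu01 := by unfold mu01; infer_instance

instance : NullSingletonClass mu01 := by unfold mu01; infer_instance

instance : NeZero mu01 := ⟨by simp [mu01]⟩

/-- There is a non-closed linear subspace of `L¹[0,1]` which, with the induced norm,
has the Daugavet property and whose norm is Gâteaux differentiable at every nonzero
point. -/
theorem exists_smooth_nonclosed_daugavet_subspace_L1 :
    ∃ X : Submodule ℝ (Lp ℝ 1 mu01),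
      ¬ IsClosed (X : Set (Lp ℝ 1 mu01)) ∧
      DaugavetProperty ↥X ∧
      ∀ f : ↥X, f ≠ 0 → SmoothPoint ↥X f :=
  exists_smooth_nonclosed_daugavet_subspace_L1_general (ae_restrict_mem measurableSet_Icc)
end

section
/- Let X be a Banach space with the Daugavet property and let Z be a closed subspace of X. If X/Z̃ has the Daugavet property for every closed subspace Z̃ ⊆ Z of codimension at most 2 in Z, then Z is poor, i.e., X/Z̃ has the Daugavet property for every closed subspace Z̃ ⊆ Z. -/
/-! For `F` in the annihilator of `V`, the Daugavet inequality for `F` and the class of `x` in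
`X ⧸ V` reads `1 + ‖F‖ * ‖x + V‖ ≤ ‖π + F ⊗ (x + V)‖`, where `π : X → X ⧸ V` is the quotient map:
composing with `π` changes no operator norm. Passing from `V` to a larger subspace `W` can only
decrease the right-hand side, and it preserves the left-hand side as long as `F` and a functional
norming `x + V` vanish on `W`. So given `V ≤ Z`, one can take for `W` the intersection of `Z` with
the kernels of these two functionals, which has codimension at most two in `Z`. -/

section Quotient

variable {𝕜 E F : Type*} [NontriviallyNormedField 𝕜]
  [SeminormedAddCommGroup E] [NormedSpace 𝕜 E] [SeminormedAddCommGroup F] [NormedSpace 𝕜 F]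

theorem le_ker_comp_mkQL (V : Submodule 𝕜 E) (A : E ⧸ V →L[𝕜] F) : V ≤ (A ∘L V.mkQL).ker :=
  fun v hv => by simp [(Submodule.Quotient.mk_eq_zero V).2 hv]

theorem norm_comp_mkQL (V : Submodule 𝕜 E) (A : E ⧸ V →L[𝕜] F) : ‖A ∘L V.mkQL‖ = ‖A‖ := by
  refine le_antisymm ?_ (A.opNorm_le_bound (norm_nonneg _) fun y => ?_)
  · refine ContinuousLinearMap.opNorm_le_bound _ (norm_nonneg A) fun x => ?_
    exact A.le_opNorm_of_le (Submodule.Quotient.norm_mk_le V x)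
  · refine le_mul_of_forall_lt₀ fun a ha b hb => ?_
    obtain ⟨x, rfl, hx⟩ := Submodule.Quotient.norm_mk_lt y (sub_pos.2 hb)
    exact (A ∘L V.mkQL).le_of_opNorm_le_of_le ha.le (by linarith)

theorem norm_liftQL (V : Submodule 𝕜 E) (A : E →L[𝕜] F) (hA : V ≤ A.ker) :
    ‖V.liftQL A hA‖ = ‖A‖ :=
  (norm_comp_mkQL V (V.liftQL A hA)).symm

theorem norm_mkQL_anti {V W : Submodule 𝕜 E} (hVW : V ≤ W) (x : E) :
    ‖W.mkQL x‖ ≤ ‖V.mkQL x‖ := by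
  have norm_mkQL_eq_infDist (U : Submodule 𝕜 E) : ‖U.mkQL x‖ = Metric.infDist x U :=
    QuotientAddGroup.norm_mk (S := U.toAddSubgroup) x
  rw [norm_mkQL_eq_infDist, norm_mkQL_eq_infDist]
  exact Metric.infDist_le_infDist_of_subset hVW ⟨0, V.zero_mem⟩

theorem norm_mkQL_add_smulRight_anti {V W : Submodule 𝕜 E} (hVW : V ≤ W)
    (f : StrongDual 𝕜 E) (x : E) :
    ‖W.mkQL + f.smulRight (W.mkQL x)‖ ≤ ‖V.mkQL + f.smulRight (V.mkQL x)‖ := by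
  refine ContinuousLinearMap.opNorm_le_bound _ (ContinuousLinearMap.opNorm_nonneg _) fun y => ?_
  have mkQL_apply (U : Submodule 𝕜 E) :
      (U.mkQL + f.smulRight (U.mkQL x)) y = U.mkQL (y + f y • x) := by simp
  calc ‖(W.mkQL + f.smulRight (W.mkQL x)) y‖
      ≤ ‖(V.mkQL + f.smulRight (V.mkQL x)) y‖ := by
        rw [mkQL_apply, mkQL_apply]
        exact norm_mkQL_anti hVW _
    _ ≤ ‖V.mkQL + f.smulRight (V.mkQL x)‖ * ‖y‖ := ContinuousLinearMap.le_opNorm _ _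

end Quotient

theorem exists_dual_forall_le_ker_norm_mkQL_le {𝕜 E : Type*} [RCLike 𝕜]
    [SeminormedAddCommGroup E] [NormedSpace 𝕜 E] (V : Submodule 𝕜 E) (x : E) :
    ∃ H : StrongDual 𝕜 E, V ≤ H.ker ∧ ∀ W ≤ H.ker, ‖V.mkQL x‖ ≤ ‖W.mkQL x‖ := by
  obtain ⟨h, hh, hx⟩ := exists_dual_vector'' 𝕜 (V.mkQL x)
  refine ⟨h ∘L V.mkQL, le_ker_comp_mkQL V h, fun W hW => ?_⟩
  have norm_lift_le : ‖W.liftQL (h ∘L V.mkQL) hW‖ ≤ 1 := by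
    rwa [norm_liftQL, norm_comp_mkQL]
  calc ‖V.mkQL x‖ = ‖h (V.mkQL x)‖ := by rw [hx, RCLike.norm_ofReal, abs_norm]
    _ = ‖W.liftQL (h ∘L V.mkQL) hW (W.mkQL x)‖ := rfl
    _ ≤ 1 * ‖W.mkQL x‖ := ContinuousLinearMap.le_of_opNorm_le _ norm_lift_le _
    _ = ‖W.mkQL x‖ := one_mul _

theorem rank_quotient_ker_inf_ker_le_two {K M : Type*} [Ring K] [StrongRankCondition K]
    [AddCommGroup M] [Module K M] (f g : M →ₗ[K] K) :
    Module.rank K (M ⧸ (f.ker ⊓ g.ker)) ≤ 2 := by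
  rw [← LinearMap.ker_prod]
  have lift_rank_le := (f.prod g).quotKerEquivRange.lift_rank_eq.trans_le
    (Cardinal.lift_le.2 (Submodule.rank_le (f.prod g).range))
  simpa [one_add_one_eq_two] using lift_rank_le

theorem rank_quotient_comap_inf_ker_inf_ker_le_two {K M : Type*} [Ring K] [StrongRankCondition K]
    [AddCommGroup M] [Module K M] (Z : Submodule K M) (f g : M →ₗ[K] K) :
    Module.rank K (Z ⧸ (Z ⊓ (f.ker ⊓ g.ker)).comap Z.subtype) ≤ 2 := by
  rw [Submodule.comap_inf, Submodule.comap_subtype_self, top_inf_eq, Submodule.comap_inf,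
    ← LinearMap.ker_comp, ← LinearMap.ker_comp]
  exact rank_quotient_ker_inf_ker_le_two _ _

section Daugavet

variable {X : Type*} [SeminormedAddCommGroup X] [NormedSpace ℝ X]

theorem daugavetProperty_iff_one_add_le : DaugavetProperty X ↔
    ∀ (f : StrongDual ℝ X) (x : X),
      1 + ‖f‖ * ‖x‖ ≤ ‖ContinuousLinearMap.id ℝ X + f.smulRight x‖ := by
  refine forall₂_congr fun f x => ?_
  rw [← ContinuousLinearMap.norm_smulRight_apply]
  refine ⟨Eq.ge, le_antisymm ((norm_add_le _ _).trans ?_)⟩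
  gcongr
  exact ContinuousLinearMap.norm_id_le

theorem daugavetProperty_quotient_iff {V : Submodule ℝ X} : DaugavetProperty (X ⧸ V) ↔
    ∀ F : StrongDual ℝ X, V ≤ F.ker → ∀ x : X,
      1 + ‖F‖ * ‖V.mkQL x‖ ≤ ‖V.mkQL + F.smulRight (V.mkQL x)‖ := by
  have norm_pullback (f : StrongDual ℝ (X ⧸ V)) (y : X ⧸ V) :
      ‖V.mkQL + (f ∘L V.mkQL).smulRight y‖ =
        ‖ContinuousLinearMap.id ℝ (X ⧸ V) + f.smulRight y‖ :=
    norm_comp_mkQL V (ContinuousLinearMap.id ℝ (X ⧸ V) + f.smulRight y)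
  rw [daugavetProperty_iff_one_add_le]
  refine ⟨fun h F hF x => ?_, fun h f y => ?_⟩
  · rw [← norm_liftQL V F hF]
    exact (h (V.liftQL F hF) (V.mkQL x)).trans_eq (norm_pullback _ _).symm
  · obtain ⟨x, rfl⟩ := V.mkQ_surjective y
    rw [← norm_pullback, ← norm_comp_mkQL]
    exact h (f ∘L V.mkQL) (le_ker_comp_mkQL V f) x

end Daugavet

theorem poor_of_codim_le_two_general {X : Type*} [SeminormedAddCommGroup X] [NormedSpace ℝ X]
    {Z : Submodule ℝ X} (hZ : IsClosed (Z : Set X))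
    (h2 : ∀ W : Submodule ℝ X, W ≤ Z → IsClosed (W : Set X) →
      Module.rank ℝ (Z ⧸ W.comap Z.subtype) ≤ 2 → DaugavetProperty (X ⧸ W))
    {V : Submodule ℝ X} (hVZ : V ≤ Z) : DaugavetProperty (X ⧸ V) := by
  refine daugavetProperty_quotient_iff.2 fun F hVF x => ?_
  obtain ⟨H, hVH, hH⟩ := exists_dual_forall_le_ker_norm_mkQL_le V x
  let W : Submodule ℝ X := Z ⊓ (F.ker ⊓ H.ker)
  have hVW : V ≤ W := le_inf hVZ (le_inf hVF hVH)
  have hWF : W ≤ F.ker := inf_le_right.trans inf_le_left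
  have hWH : W ≤ H.ker := inf_le_right.trans inf_le_right
  have hW : DaugavetProperty (X ⧸ W) :=
    h2 W inf_le_left (hZ.inter (F.isClosed_ker.inter H.isClosed_ker))
      (rank_quotient_comap_inf_ker_inf_ker_le_two Z F.toLinearMap H.toLinearMap)
  calc 1 + ‖F‖ * ‖V.mkQL x‖ ≤ 1 + ‖F‖ * ‖W.mkQL x‖ := by gcongr; exact hH W hWH
    _ ≤ ‖W.mkQL + F.smulRight (W.mkQL x)‖ := daugavetProperty_quotient_iff.1 hW F hWF x
    _ ≤ ‖V.mkQL + F.smulRight (V.mkQL x)‖ := norm_mkQL_add_smulRight_anti hVW F x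

/-- If `X/Z̃` has the Daugavet property for every closed subspace `Z̃ ⊆ Z` of
codimension at most 2 in `Z`, then `Z` is poor: `X/Z̃` has the Daugavet property for
every closed subspace `Z̃ ⊆ Z`. -/
theorem poor_of_codim_le_two
    (X : Type*) [NormedAddCommGroup X] [NormedSpace ℝ X] [CompleteSpace X]
    (hX : DaugavetProperty X)
    (Z : Submodule ℝ X) (hZ : IsClosed (Z : Set X))
    (h2 : ∀ Z' : Submodule ℝ X, Z' ≤ Z → IsClosed (Z' : Set X) →
      Module.rank ℝ (↥Z ⧸ Z'.comap Z.subtype) ≤ 2 → DaugavetProperty (X ⧸ Z')) :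
    ∀ Z' : Submodule ℝ X, Z' ≤ Z → IsClosed (Z' : Set X) → DaugavetProperty (X ⧸ Z') :=
  fun _ hZ' _ => poor_of_codim_le_two_general hZ h2 hZ'
end

section
/- Let X be a Banach space with the Daugavet property and let Z be a reflexive closed subspace of X. Then Z is poor in X; in particular, the quotient space X/Z has the Daugavet property. -/
/-- A real normed space is reflexive if the canonical embedding into its double dual
is surjective. -/
def ReflexiveSpace (E : Type*) [NormedAddCommGroup E] [NormedSpace ℝ E] : Prop :=
  Function.Surjective (NormedSpace.inclusionInDoubleDual ℝ E)

open Bornology Metric Set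
open scoped Pointwise

section Seminormed

variable {X : Type*} [SeminormedAddCommGroup X] [NormedSpace ℝ X]

/-- The slice of the closed unit ball cut off by `f` at depth `η` below `‖f‖`, the supremum of `f`
on the ball. The functional is not normalized, and `f = 0` gives the whole ball when `0 < η`. -/
def slice (f : StrongDual ℝ X) (η : ℝ) : Set X :=
  closedBall 0 1 ∩ {y | ‖f‖ - η < f y}

/-- The subsets of `X` that are slices of the closed unit ball of positive depth. -/
def IsSlice (S : Set X) : Prop :=
  ∃ (f : StrongDual ℝ X) (η : ℝ), 0 < η ∧ S = slice f η

lemma norm_le_one_of_mem_slice {f : StrongDual ℝ X} {η : ℝ} {y : X} (hy : y ∈ slice f η) :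
    ‖y‖ ≤ 1 :=
  mem_closedBall_zero_iff.mp hy.1

lemma apply_le_opNorm_of_norm_le_one (f : StrongDual ℝ X) {y : X} (hy : ‖y‖ ≤ 1) : f y ≤ ‖f‖ :=
  (Real.le_norm_self _).trans (f.unit_le_opNorm y hy)

lemma apply_le_norm_of_opNorm_le_one_s9 {g : StrongDual ℝ X} (hg : ‖g‖ ≤ 1) (y : X) : g y ≤ ‖y‖ :=
  calc g y ≤ ‖g y‖ := Real.le_norm_self _
    _ ≤ 1 * ‖y‖ := g.le_of_opNorm_le hg y
    _ = ‖y‖ := one_mul _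

namespace IsSlice

variable {S : Set X}

lemma norm_le_one (hS : IsSlice S) {y : X} (hy : y ∈ S) : ‖y‖ ≤ 1 := by
  obtain ⟨f, η, -, rfl⟩ := hS
  exact norm_le_one_of_mem_slice hy

lemma isBounded (hS : IsSlice S) : IsBounded S :=
  isBounded_closedBall.subset fun _ hy => mem_closedBall_zero_iff.mpr (hS.norm_le_one hy)

lemma convex (hS : IsSlice S) : Convex ℝ S := by
  obtain ⟨f, η, -, rfl⟩ := hS
  exact (convex_closedBall 0 1).inter (convex_halfSpace_gt f.toLinearMap.isLinear _)

end IsSlice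

end Seminormed

section Normed

variable {X : Type*} [NormedAddCommGroup X] [NormedSpace ℝ X]

lemma exists_norm_lt_one_sub_lt_apply (f : StrongDual ℝ X) {η : ℝ} (hη : 0 < η) :
    ∃ y, ‖y‖ < 1 ∧ ‖f‖ - η < f y := by
  obtain ⟨y, hy, hfy⟩ := f.exists_lt_apply_of_lt_opNorm (sub_lt_self ‖f‖ hη)
  rcases lt_abs.mp hfy with h | h
  · exact ⟨y, hy, h⟩
  · exact ⟨-y, by rwa [norm_neg], by rwa [map_neg]⟩

namespace IsSlice

variable {S : Set X}

lemma nonempty (hS : IsSlice S) : S.Nonempty := by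
  obtain ⟨f, η, hη, rfl⟩ := hS
  obtain ⟨y, hy, hfy⟩ := exists_norm_lt_one_sub_lt_apply f hη
  exact ⟨y, mem_closedBall_zero_iff.mpr hy.le, hfy⟩

lemma exists_ne_zero_slice_subset [Nontrivial X] (hS : IsSlice S) :
    ∃ (f : StrongDual ℝ X) (η : ℝ), f ≠ 0 ∧ 0 < η ∧ slice f η ⊆ S := by
  obtain ⟨f, η, hη, rfl⟩ := hS
  obtain rfl | hf := eq_or_ne f 0
  · obtain ⟨g, hg, -⟩ := exists_dual_vector' ℝ (0 : X)
    refine ⟨g, 1, norm_pos_iff.mp (hg ▸ one_pos), one_pos, fun y hy => ⟨hy.1, ?_⟩⟩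
    simpa using hη
  · exact ⟨f, η, hf, hη, subset_rfl⟩

end IsSlice

end Normed

namespace DaugavetProperty

variable {X : Type*} [NormedAddCommGroup X] [NormedSpace ℝ X]

lemma nontrivial (hX : DaugavetProperty X) : Nontrivial X := by
  by_contra h
  have := not_nontrivial_iff_subsingleton.mp h
  simpa [Subsingleton.elim (ContinuousLinearMap.id ℝ X) 0] using hX 0 0

lemma exists_nonneg_apply_lt_norm_add_smul (hX : DaugavetProperty X) (f : StrongDual ℝ X) (u : X)
    {δ : ℝ} (hδ : 0 < δ) :
    ∃ y, ‖y‖ ≤ 1 ∧ 0 ≤ f y ∧ 1 + ‖f‖ * ‖u‖ - δ < ‖y + f y • u‖ := by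
  have hnorm := hX f u
  rw [ContinuousLinearMap.norm_smulRight_apply] at hnorm
  obtain ⟨y, hy, hTy⟩ :=
    (ContinuousLinearMap.id ℝ X + f.smulRight u).exists_lt_apply_of_lt_opNorm
      (r := 1 + ‖f‖ * ‖u‖ - δ) (by rw [hnorm]; exact sub_lt_self _ hδ)
  rcases le_total 0 (f y) with hfy | hfy
  · exact ⟨y, hy.le, hfy, hTy⟩
  · refine ⟨-y, by simpa using hy.le, by simpa using hfy, ?_⟩
    rwa [map_neg, neg_smul, ← neg_add, norm_neg]

lemma exists_dual_almost_norming (hX : DaugavetProperty X) {f : StrongDual ℝ X} (hf : f ≠ 0)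
    {u : X} (hu : u ≠ 0) {δ : ℝ} (hδ : 0 < δ) :
    ∃ g : StrongDual ℝ X, ‖g‖ ≤ 1 ∧ ‖f‖ + 1 - δ < ‖f + g‖ ∧ ‖u‖ - δ < g u := by
  have hf₀ : 0 < ‖f‖ := norm_pos_iff.mpr hf
  have hu₀ : 0 < ‖u‖ := norm_pos_iff.mpr hu
  obtain ⟨τ, hτ, hτδ, hτuδ, hτfδ, hτfu⟩ : ∃ τ : ℝ, 0 < τ ∧ τ ≤ δ / 2 ∧ τ ≤ ‖u‖ * (δ / 2) ∧
      τ ≤ ‖f‖ * δ ∧ τ ≤ ‖f‖ * ‖u‖ :=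
    ⟨min (min (δ / 2) (‖u‖ * (δ / 2))) (min (‖f‖ * δ) (‖f‖ * ‖u‖)), by positivity, by simp,
      by simp, by simp, by simp⟩
  obtain ⟨y, hy, hfy₀, hnorm⟩ := hX.exists_nonneg_apply_lt_norm_add_smul f u hτ
  obtain ⟨g, hg, hgnorm⟩ := exists_dual_vector'' ℝ (y + f y • u)
  have hsum : 1 + ‖f‖ * ‖u‖ - τ < g y + f y * g u := by
    calc 1 + ‖f‖ * ‖u‖ - τ < ‖y + f y • u‖ := hnorm
      _ = g (y + f y • u) := hgnorm.symm
      _ = g y + f y * g u := by rw [map_add, map_smul, smul_eq_mul]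
  have hfy : f y ≤ ‖f‖ := apply_le_opNorm_of_norm_le_one f hy
  have hgy : g y ≤ 1 := (apply_le_norm_of_opNorm_le_one_s9 hg y).trans hy
  have hgu : g u ≤ ‖u‖ := apply_le_norm_of_opNorm_le_one_s9 hg u
  refine ⟨g, hg, ?_, ?_⟩
  · have hfgu : f y * g u ≤ f y * ‖u‖ := by gcongr
    have hfyu : f y * ‖u‖ ≤ ‖f‖ * ‖u‖ := by gcongr
    have hgy_near : 1 - δ / 2 < g y := by linarith
    have hfy_near : ‖f‖ - δ / 2 < f y := lt_of_mul_lt_mul_right (by linarith) hu₀.le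
    calc ‖f‖ + 1 - δ < (f + g) y := by
          rw [add_apply]
          linarith only [hfy_near, hgy_near]
      _ ≤ ‖f + g‖ := apply_le_opNorm_of_norm_le_one (f + g) hy
  · have hgu₀ : 0 < g u := pos_of_mul_pos_right (by linarith : 0 < f y * g u) hfy₀
    have hfgu : f y * g u ≤ ‖f‖ * g u := by gcongr
    exact lt_of_mul_lt_mul_left (by linarith) hf₀.le

lemma exists_isSlice_subset_forall_lt_norm_add (hX : DaugavetProperty X) {S : Set X}
    (hS : IsSlice S) (u : X) {ε : ℝ} (hε : 0 < ε) :
    ∃ T ⊆ S, IsSlice T ∧ ∀ y ∈ T, ‖u‖ + 1 - ε < ‖u + y‖ := by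
  have := hX.nontrivial
  wlog hu : u ≠ 0 generalizing u with hne
  · obtain ⟨u', hu'⟩ := exists_ne (0 : X)
    obtain ⟨T, hTS, hT, hTu'⟩ := hne u' hu'
    refine ⟨T, hTS, hT, fun y hy => ?_⟩
    rw [not_not.mp hu, norm_zero, zero_add, zero_add]
    linarith [hTu' y hy, norm_add_le u' y]
  obtain ⟨f, η, hf, hη, hfS⟩ := hS.exists_ne_zero_slice_subset
  obtain ⟨δ, hδ, hδη, hδε⟩ : ∃ δ : ℝ, 0 < δ ∧ δ ≤ η / 2 ∧ δ ≤ ε / 3 :=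
    ⟨min (η / 2) (ε / 3), by positivity, min_le_left _ _, min_le_right _ _⟩
  obtain ⟨g, hg, hfg, hgu⟩ := hX.exists_dual_almost_norming hf hu hδ
  refine ⟨slice (f + g) δ, fun y hy => hfS ⟨hy.1, ?_⟩, ⟨f + g, δ, hδ, rfl⟩, fun y hy => ?_⟩
  · have hfgy : ‖f + g‖ - δ < f y + g y := hy.2
    have hgy := apply_le_opNorm_of_norm_le_one g (norm_le_one_of_mem_slice hy)
    exact (by linarith : ‖f‖ - η < f y)
  · have hfgy : ‖f + g‖ - δ < f y + g y := hy.2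
    have hfy := apply_le_opNorm_of_norm_le_one f (norm_le_one_of_mem_slice hy)
    calc ‖u‖ + 1 - ε < g (u + y) := by rw [map_add]; linarith
      _ ≤ ‖u + y‖ := apply_le_norm_of_opNorm_le_one_s9 hg _

lemma exists_isSlice_subset_forall_lt_norm_add_of_finite (hX : DaugavetProperty X) {S : Set X}
    (hS : IsSlice S) {t : Set X} (ht : t.Finite) {ε : ℝ} (hε : 0 < ε) :
    ∃ T ⊆ S, IsSlice T ∧ ∀ y ∈ T, ∀ u ∈ t, ‖u‖ + 1 - ε < ‖u + y‖ := by
  induction t, ht using Set.Finite.induction_on with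
  | empty => exact ⟨S, subset_rfl, hS, by simp⟩
  | @insert u t _ _ ih =>
    obtain ⟨T, hTS, hT, hTt⟩ := ih
    obtain ⟨T', hT'T, hT', hT'u⟩ := hX.exists_isSlice_subset_forall_lt_norm_add hT u hε
    exact ⟨T', hT'T.trans hTS, hT', fun y hy =>
      forall_mem_insert.mpr ⟨hT'u y hy, hTt y (hT'T hy)⟩⟩

lemma exists_isSlice_subset_forall_lt_norm_add_of_totallyBounded (hX : DaugavetProperty X)
    {S : Set X} (hS : IsSlice S) {K : Set X} (hK : TotallyBounded K) {ε : ℝ} (hε : 0 < ε) :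
    ∃ T ⊆ S, IsSlice T ∧ ∀ y ∈ T, ∀ u ∈ K, ‖u‖ + 1 - ε < ‖u + y‖ := by
  obtain ⟨t, ht, hKt⟩ := Metric.totallyBounded_iff.mp hK (ε / 3) (by positivity)
  obtain ⟨T, hTS, hT, hTt⟩ :=
    hX.exists_isSlice_subset_forall_lt_norm_add_of_finite hS ht (ε := ε / 3) (by positivity)
  refine ⟨T, hTS, hT, fun y hy u hu => ?_⟩
  obtain ⟨v, hv, huv⟩ := mem_iUnion₂.mp (hKt hu)
  rw [mem_ball, dist_eq_norm] at huv
  have hvy := hTt y hy v hv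
  have hu_le : ‖u‖ ≤ ‖v‖ + ‖u - v‖ := norm_le_norm_add_norm_sub' u v
  have hvy_le : ‖v + y‖ ≤ ‖u + y‖ + ‖u - v‖ := by
    simpa [norm_sub_rev] using norm_le_norm_add_norm_sub' (v + y) (u + y)
  linarith

lemma exists_seq_slices (hX : DaugavetProperty X) {S : Set X} (hS : IsSlice S) {B : Set X → Set X}
    (hB : ∀ T ⊆ S, IsSlice T → (B T).Nonempty) {ε : ℝ} (hε : 0 < ε) :
    ∃ T K : ℕ → Set X, Antitone T ∧ Monotone K ∧ (∀ n, T n ⊆ S ∧ IsSlice (T n)) ∧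
      (∀ n, Convex ℝ (K n)) ∧ (∀ n, (B (T n) ∩ K (n + 1)).Nonempty) ∧
      ∀ n, ∀ y ∈ T n, ∀ u ∈ K n, ‖u‖ + 1 - ε < ‖u + y‖ := by
  let Stage := {p : Set X × Set X // p.1 ⊆ S ∧ IsSlice p.1 ∧ Convex ℝ p.2 ∧ TotallyBounded p.2 ∧
    ∀ y ∈ p.1, ∀ u ∈ p.2, ‖u‖ + 1 - ε < ‖u + y‖}
  have extend (p : Stage) : ∃ q : Stage, q.1.1 ⊆ p.1.1 ∧ p.1.2 ⊆ q.1.2 ∧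
      (B p.1.1 ∩ q.1.2).Nonempty := by
    obtain ⟨⟨T, K⟩, hTS, hT, -, hK, -⟩ := p
    obtain ⟨v, hv⟩ := hB T hTS hT
    have hK' : TotallyBounded (convexHull ℝ (insert v K)) := (hK.insert v).convexHull
    obtain ⟨T', hT'T, hT', hT'K⟩ :=
      hX.exists_isSlice_subset_forall_lt_norm_add_of_totallyBounded hT hK' hε
    exact ⟨⟨(T', convexHull ℝ (insert v K)), hT'T.trans hTS, hT', convex_convexHull ℝ _, hK', hT'K⟩,
      hT'T, (subset_insert v K).trans (subset_convexHull ℝ _),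
      v, hv, subset_convexHull ℝ _ (mem_insert v K)⟩
  choose next hanti hmono hmeet using extend
  let stage (n : ℕ) : Stage :=
    next^[n] ⟨(S, ∅), subset_rfl, hS, convex_empty, totallyBounded_empty, by simp⟩
  have stage_succ (n : ℕ) : stage (n + 1) = next (stage n) := Function.iterate_succ_apply' ..
  refine ⟨fun n => (stage n).1.1, fun n => (stage n).1.2, antitone_nat_of_succ_le fun n => ?_,
    monotone_nat_of_le_succ fun n => ?_, fun n => ⟨(stage n).2.1, (stage n).2.2.1⟩,
    fun n => (stage n).2.2.2.1, fun n => ?_, fun n => (stage n).2.2.2.2.2⟩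
  · simpa only [stage_succ] using hanti (stage n)
  · simpa only [stage_succ] using hmono (stage n)
  · simpa only [stage_succ] using hmeet (stage n)

end DaugavetProperty

lemma daugavetProperty_of_forall_exists {Y : Type*} [SeminormedAddCommGroup Y] [NormedSpace ℝ Y]
    (h : ∀ (f : StrongDual ℝ Y) (y : Y) (ε : ℝ), 0 < ε →
      ∃ v, ‖v‖ ≤ 1 ∧ ‖f‖ - ε < f v ∧ ‖y‖ + 1 - ε ≤ ‖y + v‖) :
    DaugavetProperty Y := by
  intro f x
  set T := ContinuousLinearMap.id ℝ Y + f.smulRight x with hT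
  refine le_antisymm ((norm_add_le _ _).trans (by gcongr; exact ContinuousLinearMap.norm_id_le)) ?_
  rw [ContinuousLinearMap.norm_smulRight_apply]
  have almost (ε : ℝ) (hε : 0 < ε) : 1 + ‖f‖ * ‖x‖ ≤ ‖T‖ + ε * (1 + ‖x‖) := by
    obtain ⟨v, hv, hfv, hxv⟩ := h f (‖f‖ • x) ε hε
    have hfv_le : f v ≤ ‖f‖ := apply_le_opNorm_of_norm_le_one f hv
    have hsplit : ‖f‖ • x + v = T v + (‖f‖ - f v) • x := by
      simp only [hT, add_apply, ContinuousLinearMap.id_apply, ContinuousLinearMap.smulRight_apply]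
      module
    have hnorm : ‖‖f‖ • x + v‖ ≤ ‖T‖ + ε * ‖x‖ := by
      rw [hsplit]
      refine norm_add_le_of_le (T.unit_le_opNorm v hv) ?_
      rw [norm_smul, Real.norm_of_nonneg (by linarith)]
      gcongr
      linarith
    rw [norm_smul, norm_norm] at hxv
    linarith
  refine le_of_forall_pos_le_add fun δ hδ => ?_
  have hδx := almost (δ / (1 + ‖x‖)) (by positivity)
  rwa [div_mul_cancel₀ δ (by positivity : 1 + ‖x‖ ≠ 0)] at hδx

namespace ReflexiveSpace

lemma isCompact_closure_toWeakSpace_image {E : Type*} [NormedAddCommGroup E] [NormedSpace ℝ E]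
    (hE : ReflexiveSpace E) {C : Set E} (hC : IsBounded C) :
    IsCompact (closure (toWeakSpace ℝ E '' C)) :=
  NormedSpace.isCompact_closure_of_isBounded ℝ E _
    (by rwa [preimage_image_eq _ (toWeakSpace ℝ E).injective]) fun φ _ => by
      obtain ⟨x, hx⟩ := hE (WeakDual.toStrongDual φ)
      exact ⟨toWeakSpace ℝ E x, hx⟩

lemma exists_forall_mem_closure {E : Type*} [NormedAddCommGroup E] [NormedSpace ℝ E]
    (hE : ReflexiveSpace E) {ι : Type*} [Nonempty ι] {C : ι → Set E} (hdir : Directed (· ⊇ ·) C)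
    (hconv : ∀ i, Convex ℝ (C i)) (hne : ∀ i, (C i).Nonempty) (hbdd : ∀ i, IsBounded (C i)) :
    ∃ w, ∀ i, w ∈ closure (C i) := by
  obtain ⟨w, hw⟩ := IsCompact.nonempty_iInter_of_directed_nonempty_isCompact_isClosed
    (fun i => closure (toWeakSpace ℝ E '' C i))
    (fun i j =>
      let ⟨k, hik, hjk⟩ := hdir i j
      ⟨k, closure_mono (image_mono hik), closure_mono (image_mono hjk)⟩)
    (fun i => ((hne i).image _).closure)
    (fun i => hE.isCompact_closure_toWeakSpace_image (hbdd i)) (fun _ => isClosed_closure)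
  refine ⟨(toWeakSpace ℝ E).symm w, fun i => ?_⟩
  have hwi := mem_iInter.mp hw i
  rw [← (hconv i).toWeakSpace_closure ℝ] at hwi
  obtain ⟨v, hv, rfl⟩ := hwi
  simpa using hv

lemma exists_forall_mem_closure_of_subset_coset {X : Type*} [NormedAddCommGroup X] [NormedSpace ℝ X]
    {Z : Submodule ℝ X} (hZ : ReflexiveSpace Z) (x : X) {ι : Type*} [Nonempty ι] {C : ι → Set X}
    (hdir : Directed (· ⊇ ·) C) (hconv : ∀ i, Convex ℝ (C i)) (hne : ∀ i, (C i).Nonempty)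
    (hbdd : ∀ i, IsBounded (C i)) (hcoset : ∀ i, ∀ v ∈ C i, v - x ∈ Z) :
    ∃ w, ∀ i, w ∈ closure (C i) := by
  let τ : Z → X := fun z => x + z
  have hτ : Isometry τ := (isometry_add_left x).comp isometry_subtype_coe
  obtain ⟨w, hw⟩ := hZ.exists_forall_mem_closure (C := fun i => τ ⁻¹' C i)
    (fun i j =>
      let ⟨k, hik, hjk⟩ := hdir i j
      ⟨k, preimage_mono hik, preimage_mono hjk⟩)
    (fun i => ((hconv i).translate_preimage_right x).linear_preimage Z.subtype)
    (fun i =>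
      let ⟨v, hv⟩ := hne i
      ⟨⟨v - x, hcoset i v hv⟩, by simpa [τ] using hv⟩)
    (fun i => hτ.antilipschitz.isBounded_preimage (hbdd i))
  exact ⟨τ w, fun i => hτ.continuous.closure_preimage_subset _ (hw i)⟩

end ReflexiveSpace

lemma DaugavetProperty.exists_mem_slice_forall_le_norm_add {X : Type*} [NormedAddCommGroup X]
    [NormedSpace ℝ X] (hX : DaugavetProperty X) {Z : Submodule ℝ X} (hZ : ReflexiveSpace Z)
    {C : Set X} (hC : Convex ℝ C) {x : X} (hCx : ∀ v ∈ C, v - x ∈ Z) {d : ℝ}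
    (hd : ∀ v ∈ C, d ≤ ‖v‖) {S : Set X} (hS : IsSlice S) {ε : ℝ} (hε : 0 < ε) :
    ∃ y ∈ S, ∀ v ∈ C, d + 1 - ε ≤ ‖v + y‖ := by
  by_contra! hclose
  let B (T : Set X) : Set X := C ∩ (ball 0 (d + 1 - ε) - T)
  have hB (T : Set X) (hTS : T ⊆ S) (hT : IsSlice T) : (B T).Nonempty := by
    obtain ⟨y, hy⟩ := hT.nonempty
    obtain ⟨v, hv, hvy⟩ := hclose y (hTS hy)
    exact ⟨v, hv, v + y, mem_ball_zero_iff.mpr hvy, y, hy, add_sub_cancel_right v y⟩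
  obtain ⟨T, K, hTanti, hKmono, hT, hK, hBK, hfar⟩ :=
    hX.exists_seq_slices hS hB (ε := ε / 3) (by positivity)
  have hBanti : Antitone fun n => B (T n) ∩ ⋃ m, K m := fun m n hmn =>
    inter_subset_inter_left _ (inter_subset_inter_right _ (sub_subset_sub_left (hTanti hmn)))
  obtain ⟨w, hw⟩ := hZ.exists_forall_mem_closure_of_subset_coset x hBanti.directed_ge
    (fun n => (hC.inter ((convex_ball 0 _).sub (hT n).2.convex)).inter
      (hKmono.directed_le.convex_iUnion fun m => hK m))
    (fun n => (hBK n).mono (inter_subset_inter_right _ (subset_iUnion K _)))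
    (fun n => (isBounded_ball.sub (hT n).2.isBounded).subset fun v hv => hv.1.2)
    (fun n v hv => hCx v hv.1.1)
  obtain ⟨p, ⟨⟨hpC, -⟩, hpK⟩, hwp⟩ := Metric.mem_closure_iff.mp (hw 0) (ε / 3) (by positivity)
  obtain ⟨m, hpm⟩ := mem_iUnion.mp hpK
  obtain ⟨_, ⟨⟨-, b, hb, y, hy, rfl⟩, -⟩, hwq⟩ :=
    Metric.mem_closure_iff.mp (hw m) (ε / 3) (by positivity)
  have hpq : ‖p - (b - y)‖ < ε / 3 + ε / 3 := by
    rw [← dist_eq_norm]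
    exact (dist_triangle_left _ _ w).trans_lt (add_lt_add hwp hwq)
  have hb' : ‖b‖ < d + 1 - ε := mem_ball_zero_iff.mp hb
  have hpy : ‖p + y‖ ≤ ‖b‖ + ‖p - (b - y)‖ := by
    simpa [sub_sub_eq_add_sub] using norm_le_norm_add_norm_sub' (p + y) b
  linarith [hfar m y hy p hpm, hd p hpC]

lemma opNorm_le_opNorm_comp_mkQL {X : Type*} [SeminormedAddCommGroup X] [NormedSpace ℝ X]
    (Z : Submodule ℝ X) (f : StrongDual ℝ (X ⧸ Z)) : ‖f‖ ≤ ‖f.comp Z.mkQL‖ := by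
  refine f.opNorm_le_bound (norm_nonneg _) fun q => le_mul_of_forall_lt₀ fun a ha b hb => ?_
  obtain ⟨x, rfl, hx⟩ := QuotientAddGroup.norm_lt_iff.mp hb
  exact (f.comp Z.mkQL).le_of_opNorm_le_of_le ha.le hx.le

theorem reflexive_subspace_poor_general {X : Type*} [NormedAddCommGroup X] [NormedSpace ℝ X]
    (hX : DaugavetProperty X) {Z Z' : Submodule ℝ X} (hrefl : ReflexiveSpace Z) (hle : Z' ≤ Z) :
    DaugavetProperty (X ⧸ Z') := by
  refine daugavetProperty_of_forall_exists fun f q ε hε => ?_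
  obtain ⟨x, rfl⟩ := Submodule.Quotient.mk_surjective Z' q
  let C : Set X := Z'.mkQ ⁻¹' {Z'.mkQ x}
  have hC : Convex ℝ C := (convex_singleton _).linear_preimage Z'.mkQ
  have hCx (v : X) (hv : v ∈ C) : v - x ∈ Z := hle ((Submodule.Quotient.eq Z').mp hv)
  have hCnorm (v : X) (hv : v ∈ C) : ‖Z'.mkQ x‖ ≤ ‖v‖ :=
    (congrArg norm hv).ge.trans (Submodule.Quotient.norm_mk_le Z' v)
  obtain ⟨y, hy, hfar⟩ := hX.exists_mem_slice_forall_le_norm_add hrefl hC hCx hCnorm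
    ⟨f.comp Z'.mkQL, ε, hε, rfl⟩ hε
  refine ⟨Z'.mkQ y, (Submodule.Quotient.norm_mk_le Z' y).trans (norm_le_one_of_mem_slice hy),
    (sub_le_sub_right (opNorm_le_opNorm_comp_mkQL Z' f) ε).trans_lt hy.2,
    QuotientAddGroup.le_norm_iff.mpr fun v hv => ?_⟩
  have hvy : v - y ∈ C := by
    rw [mem_preimage, mem_singleton_iff, map_sub, sub_eq_iff_eq_add]
    exact hv
  simpa using hfar (v - y) hvy

/-- A reflexive closed subspace `Z` of a Banach space with the Daugavet property is
poor; in particular `X/Z` has the Daugavet property. -/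
theorem reflexive_subspace_poor
    (X : Type*) [NormedAddCommGroup X] [NormedSpace ℝ X] [CompleteSpace X]
    (hX : DaugavetProperty X)
    (Z : Submodule ℝ X) (hZ : IsClosed (Z : Set X)) (hrefl : ReflexiveSpace ↥Z) :
    (∀ Z' : Submodule ℝ X, Z' ≤ Z → IsClosed (Z' : Set X) → DaugavetProperty (X ⧸ Z')) ∧
      DaugavetProperty (X ⧸ Z) :=
  ⟨fun _ hle _ => reflexive_subspace_poor_general hX hrefl hle,
    reflexive_subspace_poor_general hX hrefl le_rfl⟩
end

section
/- Let Λ = (λ_i) be a strictly increasing sequence of positive real numbers with λ_i → ∞, and let Z be the closed linear span in C[0,1] of the functions {1, x^{λ₁}, x^{λ₂}, …}. Then Z is not poor in C[0,1]; that is, there exists a closed subspace Z̃ ⊆ Z such that the quotient C[0,1]/Z̃ does not have the Daugavet property. -/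
/-- The Banach space `C[0,1]` of continuous real functions on `[0,1]` with the sup norm. -/
abbrev C01 : Type := C(Set.Icc (0 : ℝ) 1, ℝ)

/-- The monomial `x ↦ x^λ` on `[0,1]` as a continuous map, for `0 < λ`. -/
noncomputable def monomial (l : ℝ) (hl : 0 < l) : C01 :=
  ⟨fun x => (x : ℝ) ^ l, continuous_subtype_val.rpow_const fun _ => Or.inr hl.le⟩

/-- The Müntz space: the closed linear span in `C[0,1]` of `{1, x^{λ₁}, x^{λ₂}, …}`. -/
noncomputable def muntzSpace (Λ : ℕ → ℝ) (hpos : ∀ i, 0 < Λ i) : Submodule ℝ C01 :=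
  (Submodule.span ℝ
    ({(1 : C01)} ∪ Set.range fun i => monomial (Λ i) (hpos i))).topologicalClosure

/-!
Let `f` be a continuous functional on `X` and `e` a vector with `f e = 1`. The Daugavet
property makes `‖Id - f ⊗ e‖ = 1 + ‖f ⊗ e‖ > 1`, so it fails as soon as the projection
`x ↦ x - f x • e` is a contraction. Take `f` to be evaluation at `1` and divide `C[0,1]` by
`Z' = Z ∩ ker f`. All `u ∈ Z` with `u 1 = 1` then have the same class `e`, so the class of
`m - m 1 • e` is represented by each `m - m 1 • x ^ λᵢ`. For large `λᵢ` the function `x ^ λᵢ` is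
a peak concentrated near `1`, where `m` is almost `m 1`; subtracting `m 1` times such a peak hardly
increases the norm of `m`.
-/

open Filter Set Topology

section Daugavet

variable {X : Type*} [SeminormedAddCommGroup X] [NormedSpace ℝ X]

theorem DaugavetProperty.apply_eq_zero_of_norm_sub_smul_le (hX : DaugavetProperty X)
    {f : X →L[ℝ] ℝ} {e : X} (hfe : ∀ x, ‖x - f x • e‖ ≤ ‖x‖) : f e = 0 := by
  have hcontr : ‖ContinuousLinearMap.id ℝ X + f.smulRight (-e)‖ ≤ 1 :=
    ContinuousLinearMap.opNorm_le_bound _ zero_le_one fun x ↦ by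
      simpa [← sub_eq_add_neg] using hfe x
  have hrank : ‖f.smulRight (-e)‖ ≤ 0 := by linarith [hX f (-e)]
  rw [ContinuousLinearMap.norm_smulRight_apply, norm_neg] at hrank
  exact norm_le_zero_iff.mp ((f.le_opNorm e).trans hrank)

theorem not_daugavetProperty_quotient_inf_ker (Z : Submodule ℝ X) (f : X →L[ℝ] ℝ)
    (hf : ∀ x, ∀ ε > 0, ∃ u ∈ Z, f u = 1 ∧ ‖x - f x • u‖ ≤ ‖x‖ + ε) :
    ¬ DaugavetProperty (X ⧸ (Z ⊓ f.ker)) := by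
  intro hD
  obtain ⟨e, heZ, hfe, -⟩ := hf 0 1 one_pos
  let g : (X ⧸ (Z ⊓ f.ker)) →L[ℝ] ℝ :=
    ⟨(Z ⊓ f.ker).liftQ f.toLinearMap inf_le_right, f.continuous.quotient_lift _⟩
  have hg : ∀ q, ‖q - g q • (Z ⊓ f.ker).mkQ e‖ ≤ ‖q‖ := fun q ↦ by
    refine le_of_forall_pos_le_add fun ε hε ↦ ?_
    obtain ⟨x, rfl, hx⟩ := Submodule.Quotient.norm_mk_lt (S := Z ⊓ f.ker) q (half_pos hε)
    obtain ⟨u, huZ, hfu, hu⟩ := hf x (ε / 2) (half_pos hε)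
    have heu : (Z ⊓ f.ker).mkQ e = (Z ⊓ f.ker).mkQ u :=
      (Submodule.Quotient.eq _).mpr ⟨Z.sub_mem heZ huZ, by simp [hfe, hfu]⟩
    calc ‖(Z ⊓ f.ker).mkQ x - f x • (Z ⊓ f.ker).mkQ e‖
        = ‖(Z ⊓ f.ker).mkQ (x - f x • u)‖ := by rw [heu, map_sub, map_smul]
      _ ≤ ‖x - f x • u‖ := Submodule.Quotient.norm_mk_le _ _
      _ ≤ ‖(Z ⊓ f.ker).mkQ x‖ + ε := by rw [Submodule.mkQ_apply]; linarith
  have hge : g ((Z ⊓ f.ker).mkQ e) = 1 := hfe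
  exact one_ne_zero (hge.symm.trans (hD.apply_eq_zero_of_norm_sub_smul_le hg))

end Daugavet

section Peaks

variable {K : Type*} [TopologicalSpace K]

/-- A subspace `Z` of `C(K, ℝ)` peaks at `t` if it contains, for every neighbourhood `U` of `t`,
`[0, 1]`-valued functions that equal `1` at `t` and are uniformly as small as desired off `U`. -/
def PeaksAt (Z : Submodule ℝ C(K, ℝ)) (t : K) : Prop :=
  ∀ U ∈ 𝓝 t, ∀ ε > 0, ∃ u ∈ Z, u t = 1 ∧ (∀ x, u x ∈ Icc (0 : ℝ) 1) ∧ ∀ x ∉ U, u x ≤ ε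

theorem abs_sub_mul_le_add {a b c ε s : ℝ} (hs : s ∈ Icc (0 : ℝ) 1) (ha : |a| ≤ c)
    (hab : |a - b| ≤ ε) : |a - b * s| ≤ c + ε :=
  have hc : 0 ≤ c := (abs_nonneg a).trans ha
  have hε : 0 ≤ ε := (abs_nonneg _).trans hab
  calc |a - b * s| = |a * (1 - s) + (a - b) * s| := by ring_nf
    _ ≤ |a| * (1 - s) + |a - b| * s := by
      refine (abs_add_le _ _).trans_eq ?_
      rw [abs_mul, abs_mul, abs_of_nonneg hs.1, abs_of_nonneg (sub_nonneg.mpr hs.2)]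
    _ ≤ c * 1 + ε * 1 := by
      gcongr
      · linarith [hs.2]
      · linarith [hs.1]
      · exact hs.1
      · exact hs.2
    _ = c + ε := by ring

variable [CompactSpace K]

theorem PeaksAt.exists_norm_sub_smul_le {Z : Submodule ℝ C(K, ℝ)} {t : K} (hZ : PeaksAt Z t)
    (m : C(K, ℝ)) {ε : ℝ} (hε : 0 < ε) : ∃ u ∈ Z, u t = 1 ∧ ‖m - m t • u‖ ≤ ‖m‖ + ε := by
  have hU : {x | |m x - m t| < ε} ∈ 𝓝 t :=
    Metric.continuousAt_iff'.mp m.continuous.continuousAt ε hε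
  obtain ⟨u, huZ, hut, hu01, hu⟩ := hZ _ hU (ε / (|m t| + 1)) (by positivity)
  refine ⟨u, huZ, hut, (ContinuousMap.norm_le _ (by positivity)).mpr fun x ↦ ?_⟩
  have hmx : |m x| ≤ ‖m‖ := m.norm_coe_le_norm x
  change |m x - m t * u x| ≤ ‖m‖ + ε
  by_cases hx : |m x - m t| < ε
  · exact abs_sub_mul_le_add (hu01 x) hmx hx.le
  · calc |m x - m t * u x| ≤ |m x| + |m t * u x| := abs_sub _ _
      _ = |m x| + |m t| * u x := by rw [abs_mul, abs_of_nonneg (hu01 x).1]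
      _ ≤ ‖m‖ + (|m t| + 1) * (ε / (|m t| + 1)) := by
        gcongr
        · exact (hu01 x).1
        · linarith
        · exact hu x hx
      _ = ‖m‖ + ε := by rw [mul_div_cancel₀ _ (by positivity)]

theorem PeaksAt.not_daugavetProperty_quotient {Z : Submodule ℝ C(K, ℝ)} {t : K}
    (hZ : PeaksAt Z t) :
    ¬ DaugavetProperty (C(K, ℝ) ⧸ (Z ⊓ (ContinuousMap.evalCLM ℝ t : C(K, ℝ) →L[ℝ] ℝ).ker)) :=
  not_daugavetProperty_quotient_inf_ker Z _ fun m _ ↦ hZ.exists_norm_sub_smul_le m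

end Peaks

theorem eventually_forall_notMem_rpow_le {U : Set (Icc (0 : ℝ) 1)} (hU : U ∈ 𝓝 1) {ε : ℝ}
    (hε : 0 < ε) : ∀ᶠ l : ℝ in atTop, ∀ x ∉ U, (x : ℝ) ^ l ≤ ε := by
  obtain ⟨r, hr1, hrU⟩ := exists_Ioc_subset_of_mem_nhds hU ⟨0, zero_lt_one⟩
  have hr : Tendsto (fun l : ℝ ↦ (r : ℝ) ^ l) atTop (𝓝 0) :=
    tendsto_rpow_atTop_of_base_lt_one _ (by linarith [r.2.1]) hr1
  filter_upwards [hr.eventually_le_const hε, eventually_ge_atTop 0] with l hl hl0 x hx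
  have hxr : x ≤ r := not_lt.mp fun hrx ↦ hx (hrU ⟨hrx, x.2.2⟩)
  exact (Real.rpow_le_rpow x.2.1 hxr hl0).trans hl

section MuntzSpace

variable {Λ : ℕ → ℝ} (hpos : ∀ i, 0 < Λ i)

theorem monomial_mem_muntzSpace (i : ℕ) : monomial (Λ i) (hpos i) ∈ muntzSpace Λ hpos :=
  Submodule.le_topologicalClosure _ (Submodule.subset_span (Or.inr ⟨i, rfl⟩))

theorem peaksAt_one_muntzSpace (hΛ : ¬ BddAbove (range Λ)) : PeaksAt (muntzSpace Λ hpos) 1 := by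
  intro U hU ε hε
  obtain ⟨N, hN⟩ := eventually_atTop.mp (eventually_forall_notMem_rpow_le hU hε)
  obtain ⟨_, ⟨i, rfl⟩, hi⟩ := not_bddAbove_iff.mp hΛ N
  exact ⟨monomial (Λ i) (hpos i), monomial_mem_muntzSpace hpos i, Real.one_rpow _,
    fun x ↦ ⟨Real.rpow_nonneg x.2.1 _, Real.rpow_le_one x.2.1 x.2.2 (hpos i).le⟩, hN _ hi.le⟩

theorem muntzSpace_not_poor_general (hΛ : ¬ BddAbove (range Λ)) :
    ∃ Z' : Submodule ℝ C01, Z' ≤ muntzSpace Λ hpos ∧ IsClosed (Z' : Set C01) ∧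
      ¬ DaugavetProperty (C01 ⧸ Z') :=
  ⟨_, inf_le_left,
    (Submodule.isClosed_topologicalClosure _).inter (ContinuousLinearMap.isClosed_ker _),
    (peaksAt_one_muntzSpace hpos hΛ).not_daugavetProperty_quotient⟩

end MuntzSpace

/-- For a strictly increasing sequence `Λ` of positive reals tending to infinity, the
Müntz space `Z = closed span {1, x^{λ₁}, x^{λ₂}, …}` is not poor in `C[0,1]`: some
closed subspace `Z̃ ⊆ Z` yields a quotient `C[0,1]/Z̃` without the Daugavet property. -/
theorem muntzSpace_not_poor
    (Λ : ℕ → ℝ) (hmono : StrictMono Λ) (hpos : ∀ i, 0 < Λ i)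
    (htop : Filter.Tendsto Λ Filter.atTop Filter.atTop) :
    ∃ Z' : Submodule ℝ C01, Z' ≤ muntzSpace Λ hpos ∧ IsClosed (Z' : Set C01) ∧
      ¬ DaugavetProperty (C01 ⧸ Z') :=
  muntzSpace_not_poor_general hpos (not_bddAbove_of_tendsto_atTop htop)
end

section
/- There exists a closed subspace Z of C[0,1] that is isomorphic (linearly homeomorphic) to c₀ and is not poor in C[0,1]; i.e., there exists a closed subspace Z̃ ⊆ Z such that C[0,1]/Z̃ does not have the Daugavet property. -/
/-- The Banach space `c₀` of real sequences converging to `0`, with the sup norm. -/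
abbrev c0 : Type := ZeroAtInftyContinuousMap ℕ ℝ

/-!
Choose continuous functions `h₀ ≥ h₁ ≥ ⋯` with values in `[0, 1]`, equal to `1` at a
non-isolated point `p` and with supports shrinking to `p`, such that `hₙ` still attains `1` at some
point where `hₙ₊₁` vanishes. The closed span of the increments `hₙ - hₙ₊₁` is an isometric copy `Z`
of `c₀` inside the functions vanishing at `p`. Modulo `Z` all the `hₙ` coincide with one class `e`,
and `g - g(p) • hₙ = (1 - hₙ) • g + hₙ • (g - g(p))` has norm at most `‖g‖ + ε` for large `n`. So
evaluation at `p` induces a functional `f` on the quotient with `f e = 1` and `‖Id - f ⊗ e‖ ≤ 1`,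
which the Daugavet property forbids.
-/

section

open Set Filter Topology
open scoped ZeroAtInfty

theorem not_daugavetProperty_of_norm_sub_smul_le {X : Type*} [SeminormedAddCommGroup X]
    [NormedSpace ℝ X] {f : X →L[ℝ] ℝ} {e : X} (hfe : f e ≠ 0)
    (hle : ∀ x, ‖x - f x • e‖ ≤ ‖x‖) : ¬ DaugavetProperty X := by
  intro hX
  have h_id_sub : ‖ContinuousLinearMap.id ℝ X + f.smulRight (-e)‖ ≤ 1 :=
    ContinuousLinearMap.opNorm_le_bound _ zero_le_one fun x ↦ by
      simpa [sub_eq_add_neg] using hle x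
  have h_norm : ‖f.smulRight (-e)‖ = 0 :=
    le_antisymm (by linarith [hX f (-e)]) (norm_nonneg _)
  have h_prod : ‖f‖ * ‖e‖ = 0 := by
    simpa only [ContinuousLinearMap.norm_smulRight_apply, norm_neg] using h_norm
  exact hfe (norm_le_zero_iff.mp ((f.le_opNorm e).trans_eq h_prod))

variable {K : Type*} [TopologicalSpace K]

section Quotient

variable [CompactSpace K] {Z : Submodule ℝ C(K, ℝ)} {p : K} {e : C(K, ℝ)}

theorem norm_sub_smul_le_add_of_eqOn_zero {g k : C(K, ℝ)} {U : Set K} {ε : ℝ} (hε : 0 ≤ ε)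
    (hk : ∀ x, k x ∈ Icc 0 1) (hkU : EqOn k 0 Uᶜ) (hgU : ∀ x ∈ U, |g x - g p| ≤ ε) :
    ‖g - g p • k‖ ≤ ‖g‖ + ε := by
  refine (ContinuousMap.norm_le _ (by positivity)).mpr fun x ↦ ?_
  obtain ⟨hk₀, hk₁⟩ := hk x
  have h_near : k x * |g x - g p| ≤ ε := by
    by_cases hx : x ∈ U
    · exact (mul_le_of_le_one_left (abs_nonneg _) hk₁).trans (hgU x hx)
    · simpa [hkU hx] using hε
  calc ‖(g - g p • k) x‖ = |(1 - k x) * g x + k x * (g x - g p)| := by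
        simp only [ContinuousMap.sub_apply, ContinuousMap.smul_apply, smul_eq_mul,
          Real.norm_eq_abs]
        ring_nf
    _ ≤ (1 - k x) * |g x| + k x * |g x - g p| := by
        simpa only [abs_mul, abs_of_nonneg hk₀, abs_of_nonneg (sub_nonneg.mpr hk₁)] using
          abs_add_le ((1 - k x) * g x) (k x * (g x - g p))
    _ ≤ ‖g‖ + ε :=
        add_le_add ((mul_le_of_le_one_left (abs_nonneg _) (by linarith)).trans
          (g.norm_coe_le_norm x)) h_near

theorem norm_mk_sub_smul_le
    (hZe : ∀ U ∈ 𝓝 p, ∃ k : C(K, ℝ), k - e ∈ Z ∧ (∀ x, k x ∈ Icc 0 1) ∧ EqOn k 0 Uᶜ)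
    (g : C(K, ℝ)) : ‖(Submodule.Quotient.mk (g - g p • e) : C(K, ℝ) ⧸ Z)‖ ≤ ‖g‖ := by
  refine le_of_forall_pos_le_add fun ε hε ↦ ?_
  have hU : {x | |g x - g p| ≤ ε} ∈ 𝓝 p :=
    g.continuous.continuousAt.eventually (Metric.closedBall_mem_nhds (g p) hε)
  obtain ⟨k, hke, hk, hkU⟩ := hZe _ hU
  have h_mk : (Submodule.Quotient.mk (g - g p • e) : C(K, ℝ) ⧸ Z) =
      Submodule.Quotient.mk (g - g p • k) := by
    rw [Submodule.Quotient.eq, sub_sub_sub_cancel_left, ← smul_sub]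
    exact Z.smul_mem (g p) hke
  rw [h_mk]
  exact (Submodule.Quotient.norm_mk_le Z _).trans
    (norm_sub_smul_le_add_of_eqOn_zero hε.le hk hkU fun _ hx ↦ hx)

theorem not_daugavetProperty_quotient (hZ : ∀ g ∈ Z, g p = 0) (he : e p ≠ 0)
    (hZe : ∀ U ∈ 𝓝 p, ∃ k : C(K, ℝ), k - e ∈ Z ∧ (∀ x, k x ∈ Icc 0 1) ∧ EqOn k 0 Uᶜ) :
    ¬ DaugavetProperty (C(K, ℝ) ⧸ Z) := by
  let evalAt : C(K, ℝ) ⧸ Z →L[ℝ] ℝ := Z.liftQL (ContinuousMap.evalCLM ℝ p) hZ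
  refine not_daugavetProperty_of_norm_sub_smul_le (f := evalAt)
    (e := Submodule.Quotient.mk e) he fun x ↦ ?_
  refine (QuotientAddGroup.le_norm_iff (S := Z.toAddSubgroup)).mpr ?_
  rintro g rfl
  exact norm_mk_sub_smul_le hZe g

end Quotient

/-- A family of nonnegative continuous functions whose finite sums are bounded by `1` and each of
which attains the value `1`. The closed span of such a family is a copy of `c₀`. Compared with
`PartitionOfUnity`, local finiteness is not required. -/
structure IsPeakingSubpartition {ι : Type*} (b : ι → C(K, ℝ)) : Prop where
  nonneg : ∀ i x, 0 ≤ b i x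
  sum_le_one : ∀ (s : Finset ι) x, ∑ i ∈ s, b i x ≤ 1
  exists_eq_one : ∀ i, ∃ x, b i x = 1

namespace IsPeakingSubpartition

variable {ι : Type*} {b : ι → C(K, ℝ)}

theorem apply_eq_zero_of_ne (hb : IsPeakingSubpartition b) {i j : ι} {x : K} (hx : b i x = 1)
    (hji : j ≠ i) : b j x = 0 := by
  classical
  have h_sum := hb.sum_le_one {j, i} x
  rw [Finset.sum_pair hji, hx] at h_sum
  exact le_antisymm (by linarith) (hb.nonneg j x)

variable [CompactSpace K]

theorem norm_sum_smul_le (hb : IsPeakingSubpartition b) {s : Finset ι} {a : ι → ℝ} {C : ℝ}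
    (hC : 0 ≤ C) (ha : ∀ i ∈ s, ‖a i‖ ≤ C) : ‖∑ i ∈ s, a i • b i‖ ≤ C := by
  refine (ContinuousMap.norm_le _ hC).mpr fun x ↦ ?_
  calc ‖(∑ i ∈ s, a i • b i) x‖ = ‖∑ i ∈ s, a i * b i x‖ := by
        simp only [ContinuousMap.sum_apply, ContinuousMap.smul_apply, smul_eq_mul]
    _ ≤ ∑ i ∈ s, C * b i x := norm_sum_le_of_le s fun i hi ↦ by
        rw [norm_mul, Real.norm_of_nonneg (hb.nonneg i x)]
        exact mul_le_mul_of_nonneg_right (ha i hi) (hb.nonneg i x)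
    _ ≤ C := by
        rw [← Finset.mul_sum]
        exact mul_le_of_le_one_right hC (hb.sum_le_one s x)

variable [TopologicalSpace ι] [DiscreteTopology ι]

theorem summable_smul (hb : IsPeakingSubpartition b) (a : C₀(ι, ℝ)) :
    Summable fun i ↦ a i • b i := by
  refine summable_iff_vanishing_norm.mpr fun ε hε ↦ ?_
  have h_tendsto : Tendsto a cofinite (𝓝 0) := cocompact_eq_cofinite ι ▸ a.zero_at_infty'
  have h_finite : {i | ¬ ‖a i‖ < ε / 2}.Finite :=
    (tendsto_zero_iff_norm_tendsto_zero.mp h_tendsto).eventually_lt_const (half_pos hε)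
  refine ⟨h_finite.toFinset, fun s hs ↦ ?_⟩
  refine (hb.norm_sum_smul_le (half_pos hε).le fun i hi ↦ ?_).trans_lt (half_lt_self hε)
  by_contra h_large
  exact Finset.disjoint_left.mp hs hi (h_finite.mem_toFinset.mpr fun h_lt ↦ h_large h_lt.le)

/-- The linear map `a ↦ ∑ aᵢ bᵢ` from `c₀(ι)`, realised as `C₀(ι, ℝ)` for a discrete index type. -/
noncomputable def c0Linear (hb : IsPeakingSubpartition b) : C₀(ι, ℝ) →ₗ[ℝ] C(K, ℝ) where
  toFun a := ∑' i, a i • b i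
  map_add' a₁ a₂ := by
    simp only [ZeroAtInftyContinuousMap.add_apply, add_smul]
    exact (hb.summable_smul a₁).tsum_add (hb.summable_smul a₂)
  map_smul' c a := by
    simp only [ZeroAtInftyContinuousMap.smul_apply, smul_assoc, RingHom.id_apply]
    exact (hb.summable_smul a).tsum_const_smul c

theorem c0Linear_apply (hb : IsPeakingSubpartition b) (a : C₀(ι, ℝ)) (x : K) :
    hb.c0Linear a x = ∑' i, a i * b i x :=
  (ContinuousMap.evalCLM ℝ x : C(K, ℝ) →L[ℝ] ℝ).map_tsum (hb.summable_smul a)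

theorem c0Linear_apply_peak (hb : IsPeakingSubpartition b) (a : C₀(ι, ℝ)) {i : ι} {x : K}
    (hx : b i x = 1) : hb.c0Linear a x = a i := by
  rw [hb.c0Linear_apply, tsum_eq_single i, hx, mul_one]
  intro j hji
  rw [hb.apply_eq_zero_of_ne hx hji, mul_zero]

theorem norm_c0Linear (hb : IsPeakingSubpartition b) (a : C₀(ι, ℝ)) :
    ‖hb.c0Linear a‖ = ‖a‖ := by
  apply le_antisymm
  · exact le_of_tendsto (hb.summable_smul a).hasSum.norm <| .of_forall fun s ↦
      hb.norm_sum_smul_le (norm_nonneg a) fun i _ ↦ a.toBCF.norm_coe_le_norm i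
  · rw [← ZeroAtInftyContinuousMap.norm_toBCF_eq_norm,
      BoundedContinuousFunction.norm_le (norm_nonneg _)]
    intro i
    obtain ⟨x, hx⟩ := hb.exists_eq_one i
    refine (congrArg norm (hb.c0Linear_apply_peak a hx)).symm.trans_le ?_
    exact (hb.c0Linear a).norm_coe_le_norm x

/-- The isometric embedding `a ↦ ∑ aᵢ bᵢ` of `c₀(ι)` into `C(K)`. -/
noncomputable def c0Isometry (hb : IsPeakingSubpartition b) : C₀(ι, ℝ) →ₗᵢ[ℝ] C(K, ℝ) :=
  ⟨hb.c0Linear, hb.norm_c0Linear⟩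

theorem mem_range_c0Isometry (hb : IsPeakingSubpartition b) (i : ι) :
    b i ∈ hb.c0Isometry.range := by
  classical
  let single : C₀(ι, ℝ) :=
    { toFun := Pi.single i 1
      continuous_toFun := continuous_of_discreteTopology
      zero_at_infty' := by
        rw [cocompact_eq_cofinite]
        exact tendsto_const_nhds.congr' <| (eventually_cofinite_ne i).mono fun j hj ↦
          (Pi.single_eq_of_ne (M := fun _ ↦ ℝ) hj 1).symm }
  have h_single (j : ι) : single j = (Pi.single i 1 : ι → ℝ) j := rfl
  refine ⟨single, (tsum_eq_single i fun j hj ↦ ?_).trans ?_⟩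
  · rw [h_single, Pi.single_eq_of_ne hj, zero_smul]
  · rw [h_single, Pi.single_eq_same, one_smul]

theorem apply_eq_zero_of_mem_range_c0Isometry (hb : IsPeakingSubpartition b) {p : K}
    (hp : ∀ i, b i p = 0) {g : C(K, ℝ)} (hg : g ∈ hb.c0Isometry.range) : g p = 0 := by
  obtain ⟨a, rfl⟩ := hg
  refine (hb.c0Linear_apply a p).trans ?_
  simp only [hp, mul_zero, tsum_zero]

end IsPeakingSubpartition

/-- A decreasing sequence of continuous functions into `[0, 1]` that peak at `p`, with supports
shrinking to `p` slowly enough that each function attains `1` where its successor vanishes. -/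
structure IsPeakingSequence (h : ℕ → C(K, ℝ)) (p : K) : Prop where
  antitone : Antitone h
  mem_Icc : ∀ n x, h n x ∈ Icc 0 1
  apply_self : ∀ n, h n p = 1
  exists_eq_one_eq_zero : ∀ n, ∃ x, h n x = 1 ∧ h (n + 1) x = 0
  exists_eqOn_zero : ∀ U ∈ 𝓝 p, ∃ n, EqOn (h n) 0 Uᶜ

namespace IsPeakingSequence

variable {h : ℕ → C(K, ℝ)} {p : K}

theorem isPeakingSubpartition_sub_succ (hh : IsPeakingSequence h p) :
    IsPeakingSubpartition fun n ↦ h n - h (n + 1) where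
  nonneg n x := sub_nonneg.mpr (hh.antitone n.le_succ x)
  sum_le_one s x := by
    obtain ⟨N, hN⟩ := s.exists_nat_subset_range
    calc ∑ n ∈ s, (h n x - h (n + 1) x) ≤ ∑ n ∈ Finset.range N, (h n x - h (n + 1) x) :=
          Finset.sum_le_sum_of_subset_of_nonneg hN fun n _ _ ↦
            sub_nonneg.mpr (hh.antitone n.le_succ x)
      _ = h 0 x - h N x := Finset.sum_range_sub' (fun n ↦ h n x) N
      _ ≤ 1 := by linarith [(hh.mem_Icc 0 x).2, (hh.mem_Icc N x).1]
  exists_eq_one n := by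
    obtain ⟨x, hx₁, hx₀⟩ := hh.exists_eq_one_eq_zero n
    exact ⟨x, by rw [ContinuousMap.sub_apply, hx₁, hx₀, sub_zero]⟩

theorem not_daugavetProperty_quotient_range [CompactSpace K] (hh : IsPeakingSequence h p) :
    ¬ DaugavetProperty
      (C(K, ℝ) ⧸ hh.isPeakingSubpartition_sub_succ.c0Isometry.range) := by
  have hb := hh.isPeakingSubpartition_sub_succ
  refine not_daugavetProperty_quotient (p := p) (e := h 0) (fun g hg ↦ ?_) ?_ fun U hU ↦ ?_
  · exact hb.apply_eq_zero_of_mem_range_c0Isometry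
      (fun n ↦ by simp only [ContinuousMap.sub_apply, hh.apply_self, sub_self]) hg
  · rw [hh.apply_self]
    exact one_ne_zero
  · obtain ⟨n, hn⟩ := hh.exists_eqOn_zero U hU
    refine ⟨h n, ?_, hh.mem_Icc n, hn⟩
    rw [← neg_sub, ← Finset.sum_range_sub' h n]
    exact Submodule.neg_mem _ (Submodule.sum_mem _ fun i _ ↦ hb.mem_range_c0Isometry i)

end IsPeakingSequence

theorem exists_strictAnti_dist_tendsto_zero {K : Type*} [MetricSpace K] (p : K)
    [(𝓝[≠] p).NeBot] :
    ∃ r : ℕ → ℝ, StrictAnti r ∧ (∀ n, 0 < r n) ∧ Tendsto r atTop (𝓝 0) ∧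
      ∀ n, ∃ x, dist x p = r n := by
  have h_glb : IsGLB ((dist · p) '' {p}ᶜ) 0 := by
    refine ⟨forall_mem_image.mpr fun _ _ ↦ dist_nonneg, fun c hc ↦ ?_⟩
    have h_tendsto : Tendsto (dist · p) (𝓝[≠] p) (𝓝 0) :=
      tendsto_nhdsWithin_of_tendsto_nhds (tendsto_iff_dist_tendsto_zero.mp tendsto_id)
    exact ge_of_tendsto h_tendsto
      (eventually_mem_nhdsWithin.mono fun x hx ↦ hc (mem_image_of_mem _ hx))
  have h_notMem : (0 : ℝ) ∉ (dist · p) '' {p}ᶜ := by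
    rintro ⟨x, hx, h_dist⟩
    exact hx (dist_eq_zero.mp h_dist)
  obtain ⟨r, hr_anti, hr_pos, hr_tendsto, hr_mem⟩ :=
    h_glb.exists_seq_strictAnti_tendsto_of_notMem h_notMem
      ((Filter.nonempty_of_mem (self_mem_nhdsWithin : {p}ᶜ ∈ 𝓝[≠] p)).image _)
  exact ⟨r, hr_anti, hr_pos, hr_tendsto, fun n ↦ (hr_mem n).imp fun _ hx ↦ hx.2⟩

theorem exists_isPeakingSequence {K : Type*} [MetricSpace K] [CompactSpace K] (p : K)
    [(𝓝[≠] p).NeBot] : ∃ h : ℕ → C(K, ℝ), IsPeakingSequence h p := by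
  obtain ⟨r, hr_anti, hr_pos, hr_tendsto, hr_dist⟩ := exists_strictAnti_dist_tendsto_zero p
  have h_urysohn (n : ℕ) : ∃ f : C(K, ℝ), EqOn f 0 {x | r n ≤ dist x p} ∧
      EqOn f 1 {x | dist x p ≤ r (n + 1)} ∧ ∀ x, f x ∈ Icc (0 : ℝ) 1 :=
    exists_continuous_zero_one_of_isClosed
      (isClosed_le continuous_const (continuous_id.dist continuous_const))
      (isClosed_le (continuous_id.dist continuous_const) continuous_const)
      (disjoint_left.mpr fun x hx hx' ↦ (hr_anti n.lt_succ_self).not_ge (hx.trans hx'))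
  choose h h_zero h_one h_mem using h_urysohn
  refine ⟨h, antitone_nat_of_succ_le fun n x ↦ ?_, h_mem, fun n ↦ ?_, fun n ↦ ?_, fun U hU ↦ ?_⟩
  · rcases le_total (r (n + 1)) (dist x p) with hx | hx
    · exact (h_zero (n + 1) hx).trans_le (h_mem n x).1
    · exact (h_mem (n + 1) x).2.trans_eq (h_one n hx).symm
  · exact h_one n ((dist_self p).trans_le (hr_pos (n + 1)).le)
  · obtain ⟨x, hx⟩ := hr_dist (n + 1)
    exact ⟨x, h_one n hx.le, h_zero (n + 1) hx.ge⟩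
  · obtain ⟨ε, hε, hεU⟩ := Metric.mem_nhds_iff.mp hU
    obtain ⟨n, hn⟩ := (hr_tendsto.eventually_lt_const hε).exists
    exact ⟨n, fun x hx ↦ h_zero n (not_lt.mp fun hxr ↦ hx (hεU (hxr.trans hn)))⟩

theorem exists_c0_subspace_not_poor_general (K : Type*) [MetricSpace K] [CompactSpace K]
    [Infinite K] :
    ∃ Z : Submodule ℝ C(K, ℝ), IsClosed (Z : Set C(K, ℝ)) ∧ Nonempty (Z ≃ₗᵢ[ℝ] c0) ∧
      ¬ DaugavetProperty (C(K, ℝ) ⧸ Z) := by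
  obtain ⟨p, _⟩ := exists_nhds_ne_neBot K
  obtain ⟨h, hh⟩ := exists_isPeakingSequence p
  let J : c0 →ₗᵢ[ℝ] C(K, ℝ) := hh.isPeakingSubpartition_sub_succ.c0Isometry
  have h_closed : IsClosed (J.range : Set C(K, ℝ)) := J.isometry.isClosedEmbedding.isClosed_range
  exact ⟨J.range, h_closed, ⟨J.equivRange.symm⟩, hh.not_daugavetProperty_quotient_range⟩

end

/-- There is a closed subspace of `C[0,1]` isomorphic to `c₀` that is not poor in
`C[0,1]`: some closed subspace `Z̃ ⊆ Z` yields a quotient without the Daugavet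
property. -/
theorem exists_c0_subspace_not_poor :
    ∃ Z : Submodule ℝ C01, IsClosed (Z : Set C01) ∧ Nonempty (↥Z ≃L[ℝ] c0) ∧
      ∃ Z' : Submodule ℝ C01, Z' ≤ Z ∧ IsClosed (Z' : Set C01) ∧
        ¬ DaugavetProperty (C01 ⧸ Z') := by
  have : Infinite (Set.Icc (0 : ℝ) 1) := Set.Icc.infinite zero_lt_one
  obtain ⟨Z, hZ, ⟨φ⟩, hD⟩ := exists_c0_subspace_not_poor_general (Set.Icc (0 : ℝ) 1)
  exact ⟨Z, hZ, ⟨φ.toContinuousLinearEquiv⟩, Z, le_rfl, hZ, hD⟩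
end

section
/- There exists a closed subspace Z of C[0,1] whose dual Z* is separable, such that the quotient space C[0,1]/Z does not have the Daugavet property. -/
/-!
The subspace `Z` is the closed span of the dyadic hat functions `h n`, which peak at `2⁻ⁿ` and
vanish at the other nodes. The `h n` are nonnegative with `∑ h n ≤ 1`, so `Z` is a copy of `c₀`:
every functional on `Z` is the norm-convergent sum of the series `∑ φ (h n) • δ_{2⁻ⁿ}`, and `Z*` is
separable.

Every member of `Z` vanishes at `0`, so `δ₀` induces a functional `f` on `C[0,1] ⧸ Z`, with
`f [1] = 1`. The partial sums of `∑ h n` lie in `Z`, take values in `[0, 1]`, and are `1` off any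
given neighbourhood of `0` from some index on. Therefore `g - g 0 • 1` can be corrected by an
element of `Z` to have norm at most `‖g‖ + ε`: it suffices to put back `g 0` away from `0`. So
`‖Id - f ⊗ [1]‖ ≤ 1`, whereas the Daugavet property would force this norm to be at least `2`.
-/

open Set Filter Topology TopologicalSpace

section SeparableDual

variable {𝕜 E ι : Type*} [RCLike 𝕜] [SeminormedAddCommGroup E] [NormedSpace 𝕜 E]
  {h : ι → E} {e : ι → StrongDual 𝕜 E} {B C : ℝ}

lemma sum_norm_apply_le_of_forall_norm_sum_smul_le {s : Finset ι}
    (hC : ∀ c : ι → 𝕜, (∀ i, ‖c i‖ = 1) → ‖∑ i ∈ s, c i • h i‖ ≤ C) (φ : StrongDual 𝕜 E) :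
    ∑ i ∈ s, ‖φ (h i)‖ ≤ ‖φ‖ * C := by
  choose c hc hcφ using fun i ↦ RCLike.exists_norm_eq_mul_self (φ (h i))
  have hsum : φ (∑ i ∈ s, c i • h i) = ((∑ i ∈ s, ‖φ (h i)‖ : ℝ) : 𝕜) := by
    simp [hcφ]
  calc ∑ i ∈ s, ‖φ (h i)‖ ≤ |∑ i ∈ s, ‖φ (h i)‖| := le_abs_self _
    _ = ‖φ (∑ i ∈ s, c i • h i)‖ := by rw [hsum, RCLike.norm_ofReal]
    _ ≤ ‖φ‖ * C := φ.le_opNorm_of_le (hC c hc)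

lemma hasSum_apply_smul_of_biorthogonal [DecidableEq ι]
    (hdense : Dense (Submodule.span 𝕜 (range h) : Set E))
    (hC : ∀ (s : Finset ι) (c : ι → 𝕜), (∀ i, ‖c i‖ = 1) → ‖∑ i ∈ s, c i • h i‖ ≤ C)
    (heB : ∀ i, ‖e i‖ ≤ B) (heh : ∀ i j, e i (h j) = if i = j then 1 else 0)
    (φ : StrongDual 𝕜 E) :
    HasSum (fun i ↦ φ (h i) • e i) φ := by
  have habs : Summable fun i ↦ ‖φ (h i)‖ :=
    summable_of_sum_le (fun _ ↦ norm_nonneg _) fun s ↦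
      sum_norm_apply_le_of_forall_norm_sum_smul_le (hC s) φ
  have hnorm (i : ι) : ‖φ (h i) • e i‖ ≤ ‖φ (h i)‖ * B := by
    rw [norm_smul]
    gcongr
    exact heB i
  obtain ⟨ψ, hψ⟩ := Summable.of_norm_bounded (habs.mul_right B) hnorm
  have hψφ : ψ = φ := by
    refine ContinuousLinearMap.ext_on hdense ?_
    rintro _ ⟨j, rfl⟩
    have hψj : HasSum (fun i ↦ (φ (h i) • e i) (h j)) (ψ (h j)) :=
      hψ.mapL (ContinuousLinearMap.apply 𝕜 𝕜 (h j))
    have hφj : HasSum (fun i ↦ (φ (h i) • e i) (h j)) (φ (h j)) := by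
      simpa [heh] using hasSum_single j fun i (hij : i ≠ j) ↦
        show (φ (h i) • e i) (h j) = 0 by simp [heh, hij]
    exact hψj.unique hφj
  rwa [hψφ] at hψ

lemma separableSpace_strongDual_of_biorthogonal [Countable ι] [DecidableEq ι]
    (hdense : Dense (Submodule.span 𝕜 (range h) : Set E))
    (hC : ∀ (s : Finset ι) (c : ι → 𝕜), (∀ i, ‖c i‖ = 1) → ‖∑ i ∈ s, c i • h i‖ ≤ C)
    (heB : ∀ i, ‖e i‖ ≤ B) (heh : ∀ i j, e i (h j) = if i = j then 1 else 0) :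
    SeparableSpace (StrongDual 𝕜 E) := by
  have hsep : IsSeparable (closure (Submodule.span 𝕜 (range e) : Set (StrongDual 𝕜 E))) :=
    (countable_range e).isSeparable.span.closure
  refine isSeparable_univ_iff.1 (hsep.mono fun φ _ ↦ ?_)
  exact mem_closure_of_tendsto (hasSum_apply_smul_of_biorthogonal hdense hC heB heh φ) <|
    .of_forall fun s ↦ Submodule.sum_mem _ fun i _ ↦
      Submodule.smul_mem _ _ (Submodule.subset_span (mem_range_self i))

lemma dense_span_range_of_coe_eq {Z : Submodule 𝕜 E}
    (hZ : Z ≤ (Submodule.span 𝕜 (range h)).topologicalClosure) {h' : ι → Z}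
    (hh' : ∀ i, (h' i : E) = h i) : Dense (Submodule.span 𝕜 (range h') : Set Z) := by
  have hcomp : Subtype.val ∘ h' = h := funext hh'
  have himage : ((↑) '' (Submodule.span 𝕜 (range h') : Set Z) : Set E) =
      Submodule.span 𝕜 (range h) := by
    rw [← Submodule.coe_subtype, ← Submodule.map_coe, Submodule.map_span, ← range_comp,
      Submodule.coe_subtype, hcomp]
  exact Subtype.dense_iff.2 fun z hz ↦ (congrArg closure himage).ge (hZ hz)

lemma separableSpace_strongDual_topologicalClosure_span [Countable ι] [DecidableEq ι]
    (hC : ∀ (s : Finset ι) (c : ι → 𝕜), (∀ i, ‖c i‖ = 1) → ‖∑ i ∈ s, c i • h i‖ ≤ C)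
    (heB : ∀ i, ‖e i‖ ≤ B) (heh : ∀ i j, e i (h j) = if i = j then 1 else 0) :
    SeparableSpace (StrongDual 𝕜 (Submodule.span 𝕜 (range h)).topologicalClosure) := by
  set Z := (Submodule.span 𝕜 (range h)).topologicalClosure with hZ
  let h' (i : ι) : Z :=
    ⟨h i, Submodule.le_topologicalClosure _ (Submodule.subset_span (mem_range_self i))⟩
  have hdense := dense_span_range_of_coe_eq hZ.le (h' := h') fun _ ↦ rfl
  refine separableSpace_strongDual_of_biorthogonal (B := B) (C := C)
    (e := fun i ↦ (e i).comp Z.subtypeL) hdense (fun s c hc ↦ ?_) (fun i ↦ ?_) heh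
  · simpa [h'] using hC s c hc
  · refine ContinuousLinearMap.opNorm_le_bound _ ((norm_nonneg _).trans (heB i)) fun z ↦ ?_
    exact (e i).le_of_opNorm_le (heB i) (z : E)

end SeparableDual

section Daugavet

lemma DaugavetProperty.one_add_abs_apply_le_norm_id_sub_smulRight {X : Type*}
    [SeminormedAddCommGroup X] [NormedSpace ℝ X] (hX : DaugavetProperty X) (f : StrongDual ℝ X)
    (x : X) : 1 + |f x| ≤ ‖ContinuousLinearMap.id ℝ X - f.smulRight x‖ := by
  have hneg : ContinuousLinearMap.id ℝ X - f.smulRight x =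
      ContinuousLinearMap.id ℝ X + f.smulRight (-x) := by
    ext y
    simp [sub_eq_add_neg]
  rw [hneg, hX f (-x), ContinuousLinearMap.norm_smulRight_apply, norm_neg]
  gcongr
  exact f.le_opNorm x

lemma opNorm_le_of_forall_mkQ {𝕜 E F : Type*} [NontriviallyNormedField 𝕜]
    [SeminormedAddCommGroup E] [NormedSpace 𝕜 E] [SeminormedAddCommGroup F] [NormedSpace 𝕜 F]
    {S : Submodule 𝕜 E} {T : E ⧸ S →L[𝕜] F} {C : ℝ} (hC : 0 ≤ C)
    (hT : ∀ x, ‖T (S.mkQ x)‖ ≤ C * ‖x‖) : ‖T‖ ≤ C := by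
  refine T.opNorm_le_bound hC fun q ↦ ?_
  refine ge_of_tendsto (x := 𝓝[>] ‖q‖) (f := fun r ↦ C * r) ?_ ?_
  · exact (tendsto_id.mono_left nhdsWithin_le_nhds).const_mul C
  filter_upwards [self_mem_nhdsWithin] with r (hr : ‖q‖ < r)
  obtain ⟨x, rfl, hx⟩ := Submodule.Quotient.norm_mk_lt q (sub_pos.2 hr)
  exact (hT x).trans (by gcongr; linarith)

lemma not_daugavetProperty_quotient_of_norm_sub_le {E : Type*} [SeminormedAddCommGroup E]
    [NormedSpace ℝ E] {Z : Submodule ℝ E} {f : StrongDual ℝ E} {x : E} (hfZ : Z ≤ f.ker)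
    (hfx : f x ≠ 0) (hx : ∀ y, ∀ ε > 0, ∃ z ∈ Z, ‖y - f y • (x - z)‖ ≤ ‖y‖ + ε) :
    ¬ DaugavetProperty (E ⧸ Z) := by
  intro hD
  let F : StrongDual ℝ (E ⧸ Z) := Z.liftQL f hfZ
  have hF (y : E) : F (Z.mkQ y) = f y := rfl
  have hlower : 1 + |f x| ≤ ‖ContinuousLinearMap.id ℝ (E ⧸ Z) - F.smulRight (Z.mkQ x)‖ := by
    simpa only [hF] using hD.one_add_abs_apply_le_norm_id_sub_smulRight F (Z.mkQ x)
  have hupper : ‖ContinuousLinearMap.id ℝ (E ⧸ Z) - F.smulRight (Z.mkQ x)‖ ≤ 1 := by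
    refine opNorm_le_of_forall_mkQ zero_le_one fun y ↦ ?_
    rw [one_mul]
    refine le_of_forall_pos_le_add fun ε hε ↦ ?_
    obtain ⟨z, hzZ, hz⟩ := hx y ε hε
    have hmk : (ContinuousLinearMap.id ℝ (E ⧸ Z) - F.smulRight (Z.mkQ x)) (Z.mkQ y) =
        Z.mkQ (y - f y • (x - z)) := by
      have hmkz : Z.mkQ z = 0 := (Submodule.Quotient.mk_eq_zero Z).2 hzZ
      rw [map_sub, map_smul, map_sub, hmkz, sub_zero]
      rfl
    rw [hmk]
    exact (Submodule.Quotient.norm_mk_le Z _).trans hz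
  linarith [abs_pos.2 hfx]

end Daugavet

section ContinuousFunctions

variable {K : Type*} [TopologicalSpace K] [CompactSpace K]

lemma norm_sub_apply_smul_one_sub_le {g r : C(K, ℝ)} {p : K} {ε : ℝ} (hε : 0 ≤ ε) (hr₀ : 0 ≤ r)
    (hr₁ : r ≤ 1) (hg : ∀ t, r t ≠ 1 → |g t - g p| ≤ ε) :
    ‖g - g p • (1 - r)‖ ≤ ‖g‖ + ε := by
  rw [ContinuousMap.norm_le _ (by positivity)]
  intro t
  have hval : (g - g p • (1 - r)) t = (g t - g p) + g p * r t := by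
    simp only [ContinuousMap.sub_apply, ContinuousMap.smul_apply, ContinuousMap.one_apply,
      smul_eq_mul]
    ring
  rw [hval]
  by_cases hrt : r t = 1
  · rw [hrt, mul_one, sub_add_cancel]
    linarith [g.norm_coe_le_norm t]
  · calc ‖(g t - g p) + g p * r t‖ ≤ ‖g t - g p‖ + ‖g p‖ * ‖r t‖ := by
          rw [← norm_mul]
          exact norm_add_le _ _
      _ ≤ ε + ‖g‖ * 1 := by
          gcongr
          · exact hg t hrt
          · exact g.norm_coe_le_norm p
          · rw [Real.norm_of_nonneg (ContinuousMap.le_def.1 hr₀ t)]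
            exact hr₁ t
      _ = ‖g‖ + ε := by ring

theorem not_daugavetProperty_quotient_of_forall_nhds {p : K} {Z : Submodule ℝ C(K, ℝ)}
    (hp : ∀ z ∈ Z, z p = 0)
    (hZ : ∀ U ∈ 𝓝 p, ∃ r ∈ Z, 0 ≤ r ∧ r ≤ 1 ∧ ∀ t ∉ U, r t = 1) :
    ¬ DaugavetProperty (C(K, ℝ) ⧸ Z) := by
  refine not_daugavetProperty_quotient_of_norm_sub_le (f := ContinuousMap.evalCLM ℝ p) (x := 1)
    hp one_ne_zero fun g ε hε ↦ ?_
  obtain ⟨r, hrZ, hr₀, hr₁, hr⟩ :=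
    hZ _ (g.continuous.continuousAt.preimage_mem_nhds (Metric.closedBall_mem_nhds (g p) hε))
  exact ⟨r, hrZ, norm_sub_apply_smul_one_sub_le hε.le hr₀ hr₁ fun t ht ↦ not_imp_comm.1 (hr t) ht⟩

lemma norm_sum_smul_le_norm_sum_of_nonneg {ι : Type*} {s : Finset ι} {c : ι → ℝ}
    {h : ι → C(K, ℝ)} (hc : ∀ i ∈ s, ‖c i‖ ≤ 1) (hh : ∀ i ∈ s, 0 ≤ h i) :
    ‖∑ i ∈ s, c i • h i‖ ≤ ‖∑ i ∈ s, h i‖ := by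
  rw [ContinuousMap.norm_le _ (norm_nonneg _)]
  intro t
  calc ‖(∑ i ∈ s, c i • h i) t‖ = ‖∑ i ∈ s, c i * h i t‖ := by simp [ContinuousMap.sum_apply]
    _ ≤ ∑ i ∈ s, h i t := norm_sum_le_of_le s fun i hi ↦ by
        have hhit : 0 ≤ h i t := ContinuousMap.le_def.1 (hh i hi) t
        rw [norm_mul, Real.norm_of_nonneg hhit]
        exact mul_le_of_le_one_left hhit (hc i hi)
    _ = (∑ i ∈ s, h i) t := (ContinuousMap.sum_apply ..).symm
    _ ≤ ‖∑ i ∈ s, h i‖ := (le_abs_self _).trans ((∑ i ∈ s, h i).norm_coe_le_norm t)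

end ContinuousFunctions

namespace C01

/-- The piecewise linear function that is `0` on `[0, 2⁻ⁿ]` and `1` on `[2¹⁻ⁿ, 1]`. -/
noncomputable def ramp (n : ℕ) : C01 :=
  ⟨fun t ↦ max 0 (min 1 (2 ^ n * t.1 - 1)), by fun_prop⟩

variable {n : ℕ} {t : Icc (0 : ℝ) 1}

lemma ramp_eq_zero (ht : 2 ^ n * t.1 ≤ 1) : ramp n t = 0 :=
  max_eq_left ((min_le_right _ _).trans (sub_nonpos.2 ht))

lemma ramp_eq_one (ht : 2 ≤ 2 ^ n * t.1) : ramp n t = 1 := by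
  have hmin : min 1 (2 ^ n * t.1 - 1) = 1 := min_eq_left (by linarith)
  exact (congrArg (max 0) hmin).trans (max_eq_right zero_le_one)

lemma ramp_nonneg (n : ℕ) : 0 ≤ ramp n := fun _ ↦ le_max_left _ _

lemma ramp_le_one (n : ℕ) : ramp n ≤ 1 := fun _ ↦ max_le zero_le_one (min_le_left _ _)

lemma monotone_ramp : Monotone ramp := fun m n hmn t ↦ by
  have hpow : (2 : ℝ) ^ m * t.1 ≤ 2 ^ n * t.1 :=
    mul_le_mul_of_nonneg_right (pow_le_pow_right₀ one_le_two hmn) t.2.1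
  exact max_le_max_left 0 (min_le_min_left 1 (sub_le_sub_right hpow 1))

lemma ramp_zero : ramp 0 = 0 :=
  ContinuousMap.ext fun t ↦ ramp_eq_zero (by simpa using t.2.2)

lemma ramp_apply_zero (n : ℕ) : ramp n 0 = 0 := ramp_eq_zero (by simp)

lemma exists_forall_notMem_ramp_eq_one {U : Set (Icc (0 : ℝ) 1)} (hU : U ∈ 𝓝 0) :
    ∃ n, ∀ t ∉ U, ramp n t = 1 := by
  obtain ⟨δ, hδ, hδU⟩ := Metric.mem_nhds_iff.1 hU
  obtain ⟨n, hn⟩ := pow_unbounded_of_one_lt (2 / δ) one_lt_two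
  refine ⟨n, fun t ht ↦ ramp_eq_one ?_⟩
  have hδt : δ ≤ t.1 := by
    by_contra! hlt
    exact ht (hδU (by simpa [Subtype.dist_eq, abs_of_nonneg t.2.1] using hlt))
  calc (2 : ℝ) = 2 / δ * δ := (div_mul_cancel₀ 2 hδ.ne').symm
    _ ≤ 2 ^ n * t.1 := by gcongr

/-- The dyadic point `2⁻ⁿ` of `[0, 1]`. -/
noncomputable def node (n : ℕ) : Icc (0 : ℝ) 1 :=
  ⟨(2 ^ n)⁻¹, by positivity, inv_le_one_of_one_le₀ (one_le_pow₀ one_le_two)⟩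

lemma ramp_node (n m : ℕ) : ramp n (node m) = if m < n then 1 else 0 := by
  split_ifs with hmn
  · refine ramp_eq_one ((le_mul_inv_iff₀ (by positivity)).2 ?_)
    rw [← pow_succ']
    exact pow_le_pow_right₀ one_le_two hmn
  · refine ramp_eq_zero ((mul_inv_le_iff₀ (by positivity)).2 ?_)
    rw [one_mul]
    exact pow_le_pow_right₀ one_le_two (not_lt.1 hmn)

/-- The dyadic hat function that peaks at `2⁻ⁿ`, supported in `[2⁻ⁿ⁻¹, 2¹⁻ⁿ]`. -/
noncomputable def hat (n : ℕ) : C01 := ramp (n + 1) - ramp n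

lemma hat_nonneg (n : ℕ) : 0 ≤ hat n := sub_nonneg.2 (monotone_ramp n.le_succ)

lemma hat_node (n m : ℕ) : hat n (node m) = if m = n then 1 else 0 := by
  simp only [hat, ContinuousMap.sub_apply, ramp_node]
  grind

lemma sum_range_hat (n : ℕ) : ∑ k ∈ Finset.range n, hat k = ramp n := by
  simp only [hat, Finset.sum_range_sub, ramp_zero, sub_zero]

lemma norm_sum_hat_le_one (s : Finset ℕ) : ‖∑ n ∈ s, hat n‖ ≤ 1 := by
  obtain ⟨N, hsN⟩ := s.exists_nat_subset_range
  have hle : ∑ n ∈ s, hat n ≤ 1 :=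
    calc ∑ n ∈ s, hat n ≤ ∑ n ∈ Finset.range N, hat n :=
          Finset.sum_le_sum_of_subset_of_nonneg hsN fun n _ _ ↦ hat_nonneg n
      _ = ramp N := sum_range_hat N
      _ ≤ 1 := ramp_le_one N
  have hnonneg : 0 ≤ ∑ n ∈ s, hat n := Finset.sum_nonneg fun n _ ↦ hat_nonneg n
  refine (ContinuousMap.norm_le _ zero_le_one).2 fun t ↦ ?_
  rw [Real.norm_of_nonneg (ContinuousMap.le_def.1 hnonneg t)]
  exact hle t

/-- The closed linear span of the dyadic hat functions, an isometric copy of `c₀` in `C[0,1]`. -/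
noncomputable def hatSpan : Submodule ℝ C01 :=
  (Submodule.span ℝ (range hat)).topologicalClosure

lemma ramp_mem_hatSpan (n : ℕ) : ramp n ∈ hatSpan := by
  rw [← sum_range_hat]
  exact Submodule.sum_mem _ fun k _ ↦
    Submodule.le_topologicalClosure _ (Submodule.subset_span (mem_range_self k))

lemma apply_zero_of_mem_hatSpan {z : C01} (hz : z ∈ hatSpan) : z 0 = 0 := by
  let δ₀ : StrongDual ℝ C01 := ContinuousMap.evalCLM ℝ 0
  have hle : hatSpan ≤ δ₀.ker := by
    refine Submodule.topologicalClosure_minimal _ (Submodule.span_le.2 ?_) δ₀.isClosed_ker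
    rintro _ ⟨n, rfl⟩
    change hat n 0 = 0
    simp [hat, ramp_apply_zero]
  exact hle hz

lemma separableSpace_strongDual_hatSpan : SeparableSpace (StrongDual ℝ hatSpan) := by
  refine separableSpace_strongDual_topologicalClosure_span (C := 1) (B := 1)
    (e := fun n ↦ ContinuousMap.evalCLM ℝ (node n)) (fun s c hc ↦ ?_) (fun n ↦ ?_)
    fun n m ↦ hat_node m n
  · exact (norm_sum_smul_le_norm_sum_of_nonneg (fun n _ ↦ (hc n).le)
      fun n _ ↦ hat_nonneg n).trans (norm_sum_hat_le_one s)
  · refine ContinuousLinearMap.opNorm_le_bound _ zero_le_one fun g ↦ ?_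
    rw [one_mul]
    exact g.norm_coe_le_norm (node n)

lemma not_daugavetProperty_quotient_hatSpan : ¬ DaugavetProperty (C01 ⧸ hatSpan) := by
  refine not_daugavetProperty_quotient_of_forall_nhds (p := 0)
    (fun _ ↦ apply_zero_of_mem_hatSpan) fun U hU ↦ ?_
  obtain ⟨n, hn⟩ := exists_forall_notMem_ramp_eq_one hU
  exact ⟨ramp n, ramp_mem_hatSpan n, ramp_nonneg n, ramp_le_one n, hn⟩

end C01

/-- There is a closed subspace `Z` of `C[0,1]` with separable dual such that
`C[0,1]/Z` does not have the Daugavet property. -/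
theorem exists_separable_dual_subspace_quotient_not_daugavet :
    ∃ Z : Submodule ℝ C01, IsClosed (Z : Set C01) ∧
      TopologicalSpace.SeparableSpace (↥Z →L[ℝ] ℝ) ∧
      ¬ DaugavetProperty (C01 ⧸ Z) := by
  exact ⟨C01.hatSpan, Submodule.isClosed_topologicalClosure _,
    C01.separableSpace_strongDual_hatSpan, C01.not_daugavetProperty_quotient_hatSpan⟩
end
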